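/- arXiv:1508.04675 — 4 statements merged into one kernel-verified Lean document; each statement's English description precedes it below -/
import Mathlib

section
/- For every d-regular graph G on n vertices and every λ > 0, the occupancy fraction of the hard-core model satisfies α_G(λ) ≤ λ(1+λ)^{d-1} / (2(1+λ)^d − 1). -/
open Finset
open scoped Classical

/-- The independence polynomial of a graph: the sum of `x ^ |I|` over all
independent sets `I` (including the empty set). -/
noncomputable def indepPoly {V : Type*} [Fintype V] (G : SimpleGraph V) (x : ℝ) : ℝ :=
  ∑ s ∈ Finset.univ.powerset.filter
      (fun s : Finset V => ∀ u ∈ s, ∀ v ∈ s, ¬ G.Adj u v), x ^ s.card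

lemma cnt_step {V : Type*} (F : Finset (Finset V)) (S : Finset V) (hS : ∀ T ∈ F, T ⊆ S)
    (hd : ∀ T ∈ F, ∀ u, T.erase u ∈ F) (k : ℕ) :
    (k + 1) * #{T ∈ F | #T = k + 1} ≤ (#S - k) * #{T ∈ F | #T = k} := by
  have h1 : #(({T ∈ F | #T = k + 1}).sigma (fun T => T)) = (k + 1) * #{T ∈ F | #T = k + 1} := by
    rw [Finset.card_sigma, Finset.sum_congr rfl (g := fun _ => k + 1)]
    · simp [mul_comm]
    · intro T hT; exact (Finset.mem_filter.1 hT).2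
  have h2 : #(({T ∈ F | #T = k}).sigma (fun T => S \ T)) = (#S - k) * #{T ∈ F | #T = k} := by
    rw [Finset.card_sigma, Finset.sum_congr rfl (g := fun _ => #S - k)]
    · simp [mul_comm]
    · intro T hT
      rw [Finset.mem_filter] at hT
      rw [Finset.card_sdiff_of_subset (hS T hT.1), hT.2]
  rw [← h1, ← h2]
  apply Finset.card_le_card_of_injOn (fun p => ⟨p.1.erase p.2, p.2⟩)
  · rintro ⟨T, u⟩ h
    simp only [Finset.mem_coe, Finset.mem_sigma, Finset.mem_filter, Finset.mem_sdiff] at h ⊢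
    obtain ⟨⟨hT, hc⟩, hu⟩ := h
    refine ⟨⟨hd T hT u, ?_⟩, hS T hT hu, by simp⟩
    rw [Finset.card_erase_of_mem hu, hc]; simp
  · rintro ⟨T, u⟩ h ⟨T', u'⟩ h' he
    simp only [Finset.mem_coe, Finset.mem_sigma, Finset.mem_filter] at h h'
    simp only [Sigma.mk.injEq, heq_eq_eq] at he
    obtain ⟨he, rfl⟩ := he
    have : T = T' := by
      rw [← Finset.insert_erase h.2, he, Finset.insert_erase h'.2]
    subst this; rfl

lemma ratio_mono (a : ℕ → ℕ) (d : ℕ) (h : ∀ k, (k + 1) * a (k + 1) ≤ (d - k) * a k)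
    (k j : ℕ) (hkj : k ≤ j) : a j * d.choose k ≤ a k * d.choose j := by
  induction j, hkj using Nat.le_induction with
  | base => exact le_rfl
  | succ j hj ih =>
    have e := Nat.choose_succ_right_eq d j
    apply Nat.le_of_mul_le_mul_left _ (Nat.succ_pos j)
    calc (j + 1) * (a (j + 1) * d.choose k) = ((j + 1) * a (j + 1)) * d.choose k := by ring
      _ ≤ ((d - j) * a j) * d.choose k := Nat.mul_le_mul_right _ (h j)
      _ = (d - j) * (a j * d.choose k) := by ring
      _ ≤ (d - j) * (a k * d.choose j) := Nat.mul_le_mul_left _ ih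
      _ = a k * (d.choose j * (d - j)) := by ring
      _ = a k * (d.choose (j + 1) * (j + 1)) := by rw [e]
      _ = (j + 1) * (a k * d.choose (j + 1)) := by ring

lemma cheb (a b : ℕ → ℝ) (s : Finset ℕ) (x : ℝ) (hx : 0 < x)
    (h : ∀ k j, k ≤ j → a j * b k ≤ a k * b j) :
    (∑ j ∈ s, b j * x ^ j) * (∑ k ∈ s, k * (a k * x ^ k)) ≤
      (∑ j ∈ s, j * (b j * x ^ j)) * (∑ k ∈ s, a k * x ^ k) := by
  have key : 0 ≤ ∑ j ∈ s, ∑ k ∈ s, (((j : ℝ) - k) * (a k * b j - a j * b k)) * (x ^ j * x ^ k) := by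
    refine Finset.sum_nonneg fun j _ => Finset.sum_nonneg fun k _ => ?_
    refine mul_nonneg ?_ (by positivity)
    rcases le_total k j with hh | hh
    · have := h k j hh
      have : (k : ℝ) ≤ j := by exact_mod_cast hh
      apply mul_nonneg <;> linarith
    · have := h j k hh
      have : (j : ℝ) ≤ k := by exact_mod_cast hh
      apply mul_nonneg_of_nonpos_of_nonpos <;> linarith
  have e : ∑ j ∈ s, ∑ k ∈ s, (((j : ℝ) - k) * (a k * b j - a j * b k)) * (x ^ j * x ^ k) =
      2 * ((∑ j ∈ s, j * (b j * x ^ j)) * (∑ k ∈ s, a k * x ^ k) -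
        (∑ j ∈ s, b j * x ^ j) * (∑ k ∈ s, k * (a k * x ^ k))) := by
    have c1 : ∑ j ∈ s, ∑ k ∈ s, ((j : ℝ) * (b j * x ^ j)) * (a k * x ^ k) =
        (∑ j ∈ s, j * (b j * x ^ j)) * (∑ k ∈ s, a k * x ^ k) := by rw [Finset.sum_mul_sum]
    have c2 : ∑ j ∈ s, ∑ k ∈ s, (b j * x ^ j) * (k * (a k * x ^ k)) =
        (∑ j ∈ s, b j * x ^ j) * (∑ k ∈ s, k * (a k * x ^ k)) := by rw [Finset.sum_mul_sum]
    have c3 : ∑ j ∈ s, ∑ k ∈ s, ((k : ℝ) * (b k * x ^ k)) * (a j * x ^ j) =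
        (∑ j ∈ s, j * (b j * x ^ j)) * (∑ k ∈ s, a k * x ^ k) := by
      rw [Finset.sum_comm, Finset.sum_mul_sum]
    have c4 : ∑ j ∈ s, ∑ k ∈ s, (b k * x ^ k) * (j * (a j * x ^ j)) =
        (∑ j ∈ s, b j * x ^ j) * (∑ k ∈ s, k * (a k * x ^ k)) := by
      rw [Finset.sum_comm, Finset.sum_mul_sum]
    rw [two_mul, ← c1, ← c2]
    nth_rewrite 2 [c1]
    nth_rewrite 2 [c2]
    rw [← c3, ← c4]
    simp only [← Finset.sum_sub_distrib, ← Finset.sum_add_distrib]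
    refine Finset.sum_congr rfl fun j _ => Finset.sum_congr rfl fun k _ => by ring
  rw [e] at key
  linarith

lemma binom_deriv (d : ℕ) (x : ℝ) :
    ∑ j ∈ Finset.range d, ((j + 1 : ℕ) : ℝ) * ((d.choose (j + 1) : ℝ) * x ^ (j + 1)) =
      d * x * (1 + x) ^ (d - 1) := by
  cases d with
  | zero => simp
  | succ m =>
    rw [add_comm 1 x, Nat.add_sub_cancel, add_pow, Finset.mul_sum]
    refine Finset.sum_congr rfl fun j _ => ?_
    have e : ((m + 1 : ℕ) : ℝ) * (m.choose j : ℝ) = ((m + 1).choose (j + 1) : ℝ) * ((j + 1 : ℕ) : ℝ) := by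
      exact_mod_cast Nat.add_one_mul_choose_eq m j
    rw [← mul_assoc, mul_comm (((j + 1 : ℕ) : ℝ)), ← e]
    simp; ring

lemma local_ineq {V : Type*} (F : Finset (Finset V)) (S : Finset V) (hS : ∀ T ∈ F, T ⊆ S)
    (hd : ∀ T ∈ F, ∀ u, T.erase u ∈ F) (h0 : ∅ ∈ F) (x : ℝ) (hx : 0 < x) :
    ((1 + x) ^ #S - 1) * ∑ T ∈ F, (#T : ℝ) * x ^ #T ≤
      #S * x * (1 + x) ^ (#S - 1) * (∑ T ∈ F, x ^ #T - 1) := by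
  set d := #S with hdS
  set a : ℕ → ℕ := fun k => #{T ∈ F | #T = k} with ha
  have hsum : ∀ f : ℕ → ℝ, ∑ T ∈ F, f #T = a 0 * f 0 + ∑ k ∈ Finset.range d, a (k+1) * f (k+1) := by
    intro f
    rw [← Finset.sum_fiberwise_of_maps_to (t := Finset.range (d + 1)) (g := Finset.card)
      (fun T hT => Finset.mem_range.2 (Nat.lt_succ_of_le (Finset.card_le_card (hS T hT))))]
    rw [Finset.sum_congr rfl (g := fun k => (a k : ℝ) * f k), Finset.sum_range_succ', add_comm]
    intro k _
    rw [Finset.sum_congr rfl (g := fun _ => f k)]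
    · simp [ha]
    · intro T hT; rw [(Finset.mem_filter.1 hT).2]
  have ha0 : a 0 = 1 := by
    simp only [ha, Finset.card_eq_zero]
    rw [Finset.card_eq_one]
    refine ⟨∅, ?_⟩
    ext T; simp only [Finset.mem_filter, Finset.mem_singleton]
    exact ⟨fun h => h.2, fun h => ⟨h ▸ h0, h⟩⟩
  have hr := ratio_mono a d (fun k => cnt_step F S hS hd k)
  rw [hsum (fun k => (k : ℝ) * x ^ k), hsum (fun k => x ^ k), ha0]
  have hc := cheb (fun k => (a k : ℝ)) (fun k => (d.choose k : ℝ))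
    ((Finset.range d).map (addRightEmbedding 1)) x hx (fun k j h => by exact_mod_cast hr k j h)
  simp only [Finset.sum_map, addRightEmbedding_apply] at hc
  rw [binom_deriv] at hc
  have hb : (1 + x) ^ d - 1 = ∑ j ∈ Finset.range d, (d.choose (j + 1) : ℝ) * x ^ (j + 1) := by
    rw [add_comm 1 x, add_pow, Finset.sum_range_succ']
    simp [mul_comm]
  rw [hb]
  calc _ = (∑ j ∈ Finset.range d, (d.choose (j + 1) : ℝ) * x ^ (j + 1)) *
        ∑ k ∈ Finset.range d, ((k + 1 : ℕ) : ℝ) * ((a (k + 1) : ℝ) * x ^ (k + 1)) := by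
        congr 1
        simp only [Nat.cast_zero, zero_mul, mul_zero, zero_add]
        exact Finset.sum_congr rfl fun k _ => by ring
    _ ≤ _ := hc
    _ = _ := by simp

/-- independent sets -/
noncomputable def indSets {V : Type*} [Fintype V] (G : SimpleGraph V) : Finset (Finset V) :=
  Finset.univ.powerset.filter (fun s : Finset V => ∀ u ∈ s, ∀ v ∈ s, ¬ G.Adj u v)

lemma mem_indSets {V : Type*} [Fintype V] (G : SimpleGraph V) (s : Finset V) :
    s ∈ indSets G ↔ ∀ u ∈ s, ∀ v ∈ s, ¬ G.Adj u v := by simp [indSets]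

/-- neighbourhood -/
noncomputable def nbh {V : Type*} [Fintype V] (G : SimpleGraph V) (v : V) : Finset V :=
  Finset.univ.filter (fun u => G.Adj v u)

lemma mem_nbh {V : Type*} [Fintype V] (G : SimpleGraph V) (v u : V) :
    u ∈ nbh G v ↔ G.Adj v u := by simp [nbh]

/-- admissible extensions inside the neighbourhood -/
noncomputable def exts {V : Type*} [Fintype V] (G : SimpleGraph V) (v : V) (J : Finset V) :
    Finset (Finset V) := (nbh G v).powerset.filter (fun T => J ∪ T ∈ indSets G)

/-- independent sets avoiding the closed neighbourhood -/
noncomputable def outer {V : Type*} [Fintype V] (G : SimpleGraph V) (v : V) : Finset (Finset V) :=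
  (indSets G).filter (fun J => Disjoint J (insert v (nbh G v)))

lemma split_sum {V : Type*} [Fintype V] (G : SimpleGraph V) (v : V) (x : ℝ) (h : Finset V → ℝ) :
    ∑ I ∈ indSets G, x ^ #I * h (I ∩ insert v (nbh G v)) =
      ∑ J ∈ outer G v, x ^ #J * (x * h {v} + ∑ T ∈ exts G v J, x ^ #T * h T) := by
  set S := insert v (nbh G v) with hSdef
  have hvn : v ∉ nbh G v := by simp [mem_nbh]
  rw [← Finset.sum_fiberwise_of_maps_to (s := indSets G) (t := outer G v) (g := fun I => I \ S)]
  · refine Finset.sum_congr rfl fun J hJ => ?_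
    rw [outer, Finset.mem_filter, ← hSdef] at hJ
    obtain ⟨hJi, hJd⟩ := hJ
    have hTS : ∀ T ∈ insert {v} (exts G v J), T ⊆ S := by
      intro T hT
      rcases Finset.mem_insert.1 hT with rfl | hT
      · simp [hSdef]
      · exact (Finset.mem_powerset.1 (Finset.mem_filter.1 hT).1).trans (Finset.subset_insert _ _)
    have hfib : (indSets G).filter (fun I => I \ S = J) =
        (insert {v} (exts G v J)).image (fun T => J ∪ T) := by
      ext I
      simp only [Finset.mem_filter, Finset.mem_image]
      constructor
      · rintro ⟨hI, rfl⟩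
        refine ⟨I ∩ S, ?_, Finset.sdiff_union_inter I S⟩
        rw [Finset.mem_insert]
        by_cases hv : v ∈ I
        · left
          ext u
          simp only [Finset.mem_inter, Finset.mem_singleton, hSdef, Finset.mem_insert, mem_nbh]
          constructor
          · rintro ⟨hu, rfl | hu'⟩
            · rfl
            · exact absurd hu' ((mem_indSets G I).1 hI v hv u hu)
          · rintro rfl; exact ⟨hv, Or.inl rfl⟩
        · right
          rw [exts, Finset.mem_filter, Finset.mem_powerset, Finset.sdiff_union_inter]
          refine ⟨?_, hI⟩
          intro u hu
          rw [Finset.mem_inter, hSdef, Finset.mem_insert] at hu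
          rcases hu with ⟨hu, rfl | hu'⟩
          · exact absurd hu hv
          · exact hu'
      · rintro ⟨T, hT, rfl⟩
        have hsd : (J ∪ T) \ S = J := by
          rw [Finset.union_sdiff_distrib, Finset.sdiff_eq_empty_iff_subset.2 (hTS T hT),
            Finset.union_empty, Finset.sdiff_eq_self_of_disjoint hJd]
        refine ⟨?_, hsd⟩
        rcases Finset.mem_insert.1 hT with rfl | hT
        · rw [mem_indSets] at hJi ⊢
          have hn : ∀ u ∈ J, ¬ G.Adj v u := fun u hu ha =>
            Finset.disjoint_left.1 hJd hu (Finset.mem_insert_of_mem ((mem_nbh G v u).2 ha))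
          intro u hu w hw
          rw [Finset.mem_union, Finset.mem_singleton] at hu hw
          rcases hu with hu | rfl <;> rcases hw with hw | rfl
          · exact hJi u hu w hw
          · exact fun ha => hn u hu ha.symm
          · exact hn w hw
          · exact G.loopless.irrefl _
        · exact (Finset.mem_filter.1 hT).2
    have hdis : ∀ T ∈ insert {v} (exts G v J), Disjoint J T := fun T hT =>
      Finset.disjoint_of_subset_right (hTS T hT) hJd
    have hint : ∀ T ∈ insert {v} (exts G v J), (J ∪ T) ∩ S = T := by
      intro T hT
      rw [Finset.union_inter_distrib_right, Finset.disjoint_iff_inter_eq_empty.1 hJd,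
        Finset.empty_union, Finset.inter_eq_left.2 (hTS T hT)]
    rw [hfib, Finset.sum_image]
    · rw [Finset.sum_congr rfl (g := fun T => x ^ #J * (x ^ #T * h T))]
      · rw [← Finset.mul_sum, Finset.sum_insert]
        · simp
        · intro hm
          exact hvn (Finset.mem_powerset.1 (Finset.mem_filter.1 hm).1 (Finset.mem_singleton_self v))
      · intro T hT
        rw [hint T hT, Finset.card_union_of_disjoint (hdis T hT), pow_add, mul_assoc]
    · intro T hT T' hT' he
      have he' : J ∪ T = J ∪ T' := he
      rw [← hint T hT, ← hint T' hT', he']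
  · intro I hI
    rw [outer, Finset.mem_filter]
    refine ⟨?_, Finset.sdiff_disjoint⟩
    rw [mem_indSets] at hI ⊢
    intro u hu w hw
    exact hI u (Finset.mem_sdiff.1 hu).1 w (Finset.mem_sdiff.1 hw).1

/-- weight of independent sets containing v -/
noncomputable def wt {V : Type*} [Fintype V] (G : SimpleGraph V) (x : ℝ) (v : V) : ℝ :=
  ∑ I ∈ indSets G, x ^ #I * (if v ∈ I then 1 else 0)

lemma exts_down {V : Type*} [Fintype V] (G : SimpleGraph V) (v : V) (J : Finset V) :
    ∀ T ∈ exts G v J, ∀ u, T.erase u ∈ exts G v J := by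
  intro T hT u
  rw [exts, Finset.mem_filter, Finset.mem_powerset, mem_indSets] at hT ⊢
  refine ⟨(Finset.erase_subset _ _).trans hT.1, fun a ha b hb => hT.2 a ?_ b ?_⟩
  · exact Finset.union_subset_union_right (Finset.erase_subset _ _) ha
  · exact Finset.union_subset_union_right (Finset.erase_subset _ _) hb

lemma exts_empty {V : Type*} [Fintype V] (G : SimpleGraph V) (v : V) (J : Finset V)
    (hJ : J ∈ outer G v) : ∅ ∈ exts G v J := by
  rw [exts, Finset.mem_filter, Finset.union_empty]
  exact ⟨by simp, (Finset.mem_filter.1 hJ).1⟩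

lemma wt_split {V : Type*} [Fintype V] (G : SimpleGraph V) (x : ℝ) (v : V) :
    wt G x v = ∑ J ∈ outer G v, x ^ #J * x := by
  have hvn : v ∉ nbh G v := by simp [mem_nbh]
  have := split_sum G v x (fun T => if v ∈ T then 1 else 0)
  simp only [Finset.mem_inter, Finset.mem_insert_self, and_true] at this
  rw [wt, this]
  refine Finset.sum_congr rfl fun J _ => ?_
  rw [Finset.sum_eq_zero]
  · simp
  · intro T hT
    rw [if_neg, mul_zero]
    exact fun hv => hvn (Finset.mem_powerset.1 (Finset.mem_filter.1 hT).1 hv)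

lemma Z_split {V : Type*} [Fintype V] (G : SimpleGraph V) (x : ℝ) (v : V) :
    ∑ I ∈ indSets G, x ^ #I = ∑ J ∈ outer G v, x ^ #J * (x + ∑ T ∈ exts G v J, x ^ #T) := by
  simpa using split_sum G v x (fun _ => 1)

lemma nbr_split {V : Type*} [Fintype V] (G : SimpleGraph V) (x : ℝ) (v : V) :
    ∑ u ∈ nbh G v, wt G x u =
      ∑ J ∈ outer G v, x ^ #J * ∑ T ∈ exts G v J, (#T : ℝ) * x ^ #T := by
  have hvn : v ∉ nbh G v := by simp [mem_nbh]
  have := split_sum G v x (fun T => (#(T ∩ nbh G v) : ℝ))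
  have e : ∀ I : Finset V, (I ∩ insert v (nbh G v)) ∩ nbh G v = nbh G v ∩ I := by
    intro I; ext u; simp only [Finset.mem_inter, Finset.mem_insert]; tauto
  simp only [e] at this
  simp only [wt]
  rw [Finset.sum_comm]
  calc _ = ∑ I ∈ indSets G, x ^ #I * (#(nbh G v ∩ I) : ℝ) := by
        refine Finset.sum_congr rfl fun I _ => ?_
        rw [← Finset.mul_sum, Finset.sum_ite_mem]
        simp
    _ = _ := this
    _ = _ := by
        refine Finset.sum_congr rfl fun J _ => ?_
        rw [Finset.singleton_inter_of_notMem hvn]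
        simp only [Finset.card_empty, Nat.cast_zero, mul_zero, zero_add]
        congr 1
        refine Finset.sum_congr rfl fun T hT => ?_
        rw [Finset.inter_eq_left.2 (Finset.mem_powerset.1 (Finset.mem_filter.1 hT).1), mul_comm]

lemma vertex_ineq {V : Type*} [Fintype V] (G : SimpleGraph V) (x : ℝ) (hx : 0 < x) (v : V)
    (d : ℕ) (hd : #(nbh G v) = d) (hd0 : 0 < d) :
    d * (1 + x) ^ d * wt G x v + ((1 + x) ^ d - 1) * ∑ u ∈ nbh G v, wt G x u ≤
      d * x * (1 + x) ^ (d - 1) * ∑ I ∈ indSets G, x ^ #I := by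
  rw [wt_split, nbr_split, Z_split G x v, Finset.mul_sum, Finset.mul_sum, Finset.mul_sum,
    ← Finset.sum_add_distrib]
  refine Finset.sum_le_sum fun J hJ => ?_
  have := local_ineq (exts G v J) (nbh G v)
    (fun T hT => Finset.mem_powerset.1 (Finset.mem_filter.1 hT).1) (exts_down G v J)
    (exts_empty G v J hJ) x hx
  rw [hd] at this
  have hp : (1 + x) ^ d = (1 + x) ^ (d - 1) * (1 + x) := by
    rw [← pow_succ, Nat.sub_add_cancel hd0]
  have h2 := mul_le_mul_of_nonneg_left this (pow_nonneg hx.le #J)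
  have e : (d : ℝ) * (1 + x) ^ d * (x ^ #J * x) =
    d * ((1 + x) ^ (d - 1) * (1 + x)) * (x ^ #J * x) := by rw [hp]
  rw [e]
  linarith

lemma vertex_zero {V : Type*} [Fintype V] (G : SimpleGraph V) (x : ℝ) (hx : 0 < x) (v : V) :
    wt G x v ≤ x * ∑ I ∈ indSets G, x ^ #I := by
  rw [wt_split, Z_split G x v, Finset.mul_sum]
  refine Finset.sum_le_sum fun J hJ => ?_
  have : (1 : ℝ) ≤ ∑ T ∈ exts G v J, x ^ #T := by
    have := Finset.single_le_sum (f := fun T : Finset V => x ^ #T)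
      (fun T _ => pow_nonneg hx.le _) (exts_empty G v J hJ)
    simpa using this
  have h3 : 0 < x ^ #J * x := by positivity
  nlinarith

lemma sum_wt {V : Type*} [Fintype V] (G : SimpleGraph V) (x : ℝ) :
    ∑ v, wt G x v = ∑ I ∈ indSets G, (#I : ℝ) * x ^ #I := by
  simp only [wt]
  rw [Finset.sum_comm]
  refine Finset.sum_congr rfl fun I _ => ?_
  rw [← Finset.mul_sum, mul_comm]
  simp

lemma deriv_poly {V : Type*} [Fintype V] (G : SimpleGraph V) (x : ℝ) :
    x * deriv (indepPoly G) x = ∑ v, wt G x v := by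
  have : HasDerivAt (indepPoly G) (∑ I ∈ indSets G, (#I : ℝ) * x ^ (#I - 1)) x := by
    have := HasDerivAt.fun_sum (u := indSets G) (x := x)
      (A := fun I y => y ^ #I) (fun I _ => hasDerivAt_pow #I x)
    exact this
  rw [this.deriv, sum_wt, Finset.mul_sum]
  refine Finset.sum_congr rfl fun I _ => ?_
  rcases Nat.eq_zero_or_pos #I with h | h
  · simp [h]
  · obtain ⟨m, hm⟩ := Nat.exists_eq_succ_of_ne_zero h.ne'
    rw [hm]; simp; ring

lemma total_ineq {V : Type*} [Fintype V] (G : SimpleGraph V) (x : ℝ) (hx : 0 < x)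
    (d : ℕ) (hd : ∀ v, #(nbh G v) = d) :
    (2 * (1 + x) ^ d - 1) * ∑ v, wt G x v ≤
      x * (1 + x) ^ (d - 1) * (Fintype.card V * ∑ I ∈ indSets G, x ^ #I) := by
  rcases Nat.eq_zero_or_pos d with h0 | h0
  · subst h0
    have := Finset.sum_le_sum (s := Finset.univ) (fun v _ => vertex_zero G x hx v)
    simp only [Finset.sum_const, Finset.card_univ, nsmul_eq_mul] at this
    norm_num
    linarith
  · have := Finset.sum_le_sum (s := Finset.univ) (fun v _ => vertex_ineq G x hx v d (hd v) h0)
    simp only [Finset.sum_const, Finset.card_univ, nsmul_eq_mul] at this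
    rw [Finset.sum_add_distrib, ← Finset.mul_sum, ← Finset.mul_sum] at this
    have e : ∑ v, ∑ u ∈ nbh G v, wt G x u = d * ∑ u, wt G x u := by
      rw [Finset.sum_comm' (t' := Finset.univ) (s' := fun u => nbh G u)
        (by intro a b; simp [mem_nbh, G.adj_comm]), Finset.mul_sum]
      refine Finset.sum_congr rfl fun u _ => ?_
      rw [Finset.sum_const, hd, nsmul_eq_mul]
    rw [e] at this
    have hdp : (0 : ℝ) < d := by exact_mod_cast h0
    apply le_of_mul_le_mul_left _ hdp
    linarith

/-- For every $d$-regular graph $G$ and every $\lambda > 0$, the occupancy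
fraction of the hard-core model on $G$ is at most that of $K_{d,d}$, namely
$\lambda(1+\lambda)^{d-1}/(2(1+\lambda)^d-1)$. -/
theorem occupancyFraction_le {V : Type*} [Fintype V] (G : SimpleGraph V) (d : ℕ)
    (hreg : G.IsRegularOfDegree d) (x : ℝ) (hx : 0 < x) :
    (1 / (Fintype.card V : ℝ)) * (x * deriv (indepPoly G) x / indepPoly G x)
      ≤ x * (1 + x) ^ (d - 1) / (2 * (1 + x) ^ d - 1) := by
  have hd : ∀ v, #(nbh G v) = d := by
    intro v
    rw [← hreg v, ← SimpleGraph.card_neighborFinset_eq_degree]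
    congr 1
    ext u
    simp [mem_nbh]
  have ht := total_ineq G x hx d hd
  have hZ : indepPoly G x = ∑ I ∈ indSets G, x ^ #I := rfl
  have hpow : (1 : ℝ) ≤ (1 + x) ^ d := one_le_pow₀ (by linarith)
  have hM : 0 < 2 * (1 + x) ^ d - 1 := by linarith
  have hZpos : 0 < indepPoly G x := by
    rw [hZ]
    exact Finset.sum_pos (fun I _ => pow_pos hx _) ⟨∅, by simp [mem_indSets]⟩
  rw [deriv_poly]
  rw [← hZ] at ht
  rcases Nat.eq_zero_or_pos (Fintype.card V) with h0 | h0
  · rw [h0]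
    simp only [Nat.cast_zero, div_zero, zero_mul]
    positivity
  · have hn : (0 : ℝ) < Fintype.card V := by exact_mod_cast h0
    rw [div_mul_div_comm, one_mul, div_le_div_iff₀ (by positivity) hM]
    linarith
end

section
/- For every d-regular graph G on n vertices and every λ > 0, (1/n) log P_G(λ) ≤ (1/(2d)) log P_{K_{d,d}}(λ) = (1/(2d)) log(2(1+λ)^d − 1). -/
open Finset
open scoped Classical

/-- Two-term Hölder inequality for `d` functions. -/
lemma two_term_holder {ι : Type*} (T : Finset ι) (d : ℕ) (hd : 1 ≤ d) (hT : T.card = d)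
    (x : ℝ) (hx : 0 < x) (a b : ι → ℝ) (ha : ∀ i, 0 < a i) (hb : ∀ i, 0 < b i) :
    ∏ i ∈ T, (a i) ^ (1 / (d : ℝ)) + x * ∏ i ∈ T, (b i) ^ (1 / (d : ℝ))
      ≤ ∏ i ∈ T, (a i + x * b i) ^ (1 / (d : ℝ)) := by
  have hd0 : (0 : ℝ) < d := by exact_mod_cast hd
  have hs : ∀ i, 0 < a i + x * b i := fun i => by have := ha i; have := hb i; positivity
  have hw : ∑ i ∈ T, (1 / (d : ℝ)) = 1 := by
    rw [sum_const, hT, nsmul_eq_mul]; field_simp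
  have h1 := Real.geom_mean_le_arith_mean_weighted T (fun _ => 1 / (d : ℝ))
    (fun i => a i / (a i + x * b i)) (fun _ _ => by positivity) hw
    (fun i _ => (div_pos (ha i) (hs i)).le)
  have h2 := Real.geom_mean_le_arith_mean_weighted T (fun _ => 1 / (d : ℝ))
    (fun i => (x * b i) / (a i + x * b i)) (fun _ _ => by positivity) hw
    (fun i _ => (div_pos (mul_pos hx (hb i)) (hs i)).le)
  have h3 : ∑ i ∈ T, 1 / (d : ℝ) * (a i / (a i + x * b i))
      + ∑ i ∈ T, 1 / (d : ℝ) * ((x * b i) / (a i + x * b i)) = 1 := by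
    rw [← sum_add_distrib]
    refine Eq.trans (sum_congr rfl fun i _ => ?_) hw
    rw [← mul_add, ← add_div, div_self (hs i).ne', mul_one]
  have hxx : x = ∏ i ∈ T, x ^ (1 / (d : ℝ)) := by
    rw [prod_const, hT, ← Real.rpow_natCast, ← Real.rpow_mul hx.le]
    rw [one_div_mul_cancel hd0.ne', Real.rpow_one]
  have h4 : ∏ i ∈ T, (a i / (a i + x * b i)) ^ (1 / (d : ℝ))
      = (∏ i ∈ T, (a i) ^ (1 / (d : ℝ))) / ∏ i ∈ T, (a i + x * b i) ^ (1 / (d : ℝ)) := by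
    rw [← prod_div_distrib]
    exact prod_congr rfl fun i _ => Real.div_rpow (ha i).le (hs i).le _
  have h5 : ∏ i ∈ T, ((x * b i) / (a i + x * b i)) ^ (1 / (d : ℝ))
      = (x * ∏ i ∈ T, (b i) ^ (1 / (d : ℝ))) / ∏ i ∈ T, (a i + x * b i) ^ (1 / (d : ℝ)) := by
    conv_rhs => rw [hxx]
    rw [← prod_mul_distrib]
    rw [← hxx, ← prod_div_distrib]
    refine prod_congr rfl fun i _ => ?_
    rw [Real.div_rpow (mul_pos hx (hb i)).le (hs i).le, Real.mul_rpow hx.le (hb i).le]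
  have hP : 0 < ∏ i ∈ T, (a i + x * b i) ^ (1 / (d : ℝ)) :=
    prod_pos fun i _ => Real.rpow_pos_of_pos (hs i) _
  rw [h4] at h1
  rw [h5] at h2
  have h6 := add_le_add h1 h2
  rw [h3, ← add_div, div_le_one hP] at h6
  exact h6

/-- Splitting a sum over the powerset of `insert v U`. -/
lemma sum_powerset_ins {V : Type*} (U : Finset V) (v : V) (hv : v ∉ U) (F : Finset V → ℝ) :
    ∑ A ∈ (insert v U).powerset, F A = ∑ A ∈ U.powerset, (F A + F (insert v A)) := by
  rw [sum_powerset_insert hv, sum_add_distrib]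

/-- Finner's inequality for subsets of a finite set. -/
lemma finner {V ι : Type*} [Fintype ι] (d : ℕ) (hd : 1 ≤ d) (x : ℝ) (hx : 0 < x)
    (U : Finset V) :
    ∀ (N : ι → Finset V) (g : ι → Finset V → ℝ), (∀ i, N i ⊆ U) → (∀ i S, 0 < g i S) →
      (∀ v ∈ U, (univ.filter fun i => v ∈ N i).card = d) →
      ∑ A ∈ U.powerset, x ^ A.card * ∏ i, (g i (A ∩ N i)) ^ (1 / (d : ℝ))
        ≤ ∏ i, (∑ S ∈ (N i).powerset, x ^ S.card * g i S) ^ (1 / (d : ℝ)) := by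
  induction U using Finset.induction_on with
  | empty =>
    intro N g hN hg _
    have : ∀ i, N i = ∅ := fun i => subset_empty.1 (hN i)
    simp [this]
  | insert v U hv ih =>
    intro N g hN hg hdeg
    let g' : ι → Finset V → ℝ := fun i S =>
      if v ∈ N i then g i S + x * g i (insert v S) else g i S
    have hg' : ∀ i S, 0 < g' i S := by
      intro i S
      have h1 := hg i S
      have h2 := hg i (insert v S)
      simp only [g']
      split_ifs <;> positivity
    have key := ih (fun i => (N i).erase v) g'
      (fun i => by
        intro w hw
        have h1 := mem_erase.1 hw
        exact (mem_insert.1 (hN i h1.2)).resolve_left h1.1) hg'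
      (fun w hw => by
        rw [← hdeg w (mem_insert_of_mem hw)]
        have : w ≠ v := fun h => hv (h ▸ hw)
        simp [this])
    have hR : ∀ i, ∑ S ∈ ((N i).erase v).powerset, x ^ S.card * g' i S
        = ∑ S ∈ (N i).powerset, x ^ S.card * g i S := by
      intro i
      by_cases h : v ∈ N i
      · conv_rhs => rw [← insert_erase h]
        rw [sum_powerset_ins _ _ (notMem_erase v _)]
        refine sum_congr rfl fun S hS => ?_
        have hvS : v ∉ S := fun hh => notMem_erase v _ (mem_powerset.1 hS hh)
        rw [card_insert_of_notMem hvS]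
        simp only [g', h, if_true]
        ring
      · rw [erase_eq_of_notMem h]
        simp [g', h]
    simp only [hR] at key
    refine le_trans ?_ key
    rw [sum_powerset_ins _ _ hv]
    refine sum_le_sum fun A hA => ?_
    have hvA : v ∉ A := fun hh => hv (mem_powerset.1 hA hh)
    rw [card_insert_of_notMem hvA, pow_succ]
    have hE : ∀ i, A ∩ (N i).erase v = A ∩ N i := by
      intro i; ext w; simp only [mem_inter, mem_erase]
      constructor
      · rintro ⟨a, _, c⟩; exact ⟨a, c⟩
      · rintro ⟨a, c⟩; exact ⟨a, fun h => hvA (h ▸ a), c⟩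
    simp only [hE]
    have hsplit : ∀ F : ι → ℝ, ∏ i, F i
        = (∏ i ∈ univ.filter (fun i => v ∈ N i), F i)
          * ∏ i ∈ univ.filter (fun i => ¬ v ∈ N i), F i :=
      fun F => (prod_filter_mul_prod_filter_not _ _ _).symm
    have hol := two_term_holder (univ.filter (fun i => v ∈ N i)) d hd
      (hdeg v (mem_insert_self _ _)) x hx (fun i => g i (A ∩ N i))
      (fun i => g i (insert v (A ∩ N i))) (fun i => hg _ _) (fun i => hg _ _)
    rw [hsplit (fun i => g i (A ∩ N i) ^ (1 / (d : ℝ))),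
      hsplit (fun i => g i (insert v A ∩ N i) ^ (1 / (d : ℝ))),
      hsplit (fun i => g' i (A ∩ N i) ^ (1 / (d : ℝ)))]
    have e1 : ∏ i ∈ univ.filter (fun i => v ∈ N i), g i (insert v A ∩ N i) ^ (1 / (d : ℝ))
        = ∏ i ∈ univ.filter (fun i => v ∈ N i), g i (insert v (A ∩ N i)) ^ (1 / (d : ℝ)) := by
      refine prod_congr rfl fun i hi => ?_
      rw [insert_inter_of_mem (mem_filter.1 hi).2]
    have e2 : ∏ i ∈ univ.filter (fun i => ¬ v ∈ N i), g i (insert v A ∩ N i) ^ (1 / (d : ℝ))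
        = ∏ i ∈ univ.filter (fun i => ¬ v ∈ N i), g i (A ∩ N i) ^ (1 / (d : ℝ)) := by
      refine prod_congr rfl fun i hi => ?_
      rw [insert_inter_of_notMem (mem_filter.1 hi).2]
    have e3 : ∏ i ∈ univ.filter (fun i => v ∈ N i), g' i (A ∩ N i) ^ (1 / (d : ℝ))
        = ∏ i ∈ univ.filter (fun i => v ∈ N i),
          (g i (A ∩ N i) + x * g i (insert v (A ∩ N i))) ^ (1 / (d : ℝ)) := by
      refine prod_congr rfl fun i hi => ?_
      simp only [g', (mem_filter.1 hi).2, if_true]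
    have e4 : ∏ i ∈ univ.filter (fun i => ¬ v ∈ N i), g' i (A ∩ N i) ^ (1 / (d : ℝ))
        = ∏ i ∈ univ.filter (fun i => ¬ v ∈ N i), g i (A ∩ N i) ^ (1 / (d : ℝ)) := by
      refine prod_congr rfl fun i hi => ?_
      simp only [g', (mem_filter.1 hi).2, if_false]
    rw [e1, e2, e3, e4]
    have hQ : 0 ≤ ∏ i ∈ univ.filter (fun i => ¬ v ∈ N i), g i (A ∩ N i) ^ (1 / (d : ℝ)) :=
      prod_nonneg fun i _ => (Real.rpow_pos_of_pos (hg _ _) _).le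
    have hm := mul_le_mul_of_nonneg_left (mul_le_mul_of_nonneg_right hol hQ)
      (pow_pos hx A.card).le
    refine le_trans (le_of_eq ?_) hm
    ring

/-- Pairs of independent sets. -/
def IndPair {V : Type*} (G : SimpleGraph V) (p : Finset V × Finset V) : Prop :=
  (∀ u ∈ p.1, ∀ v ∈ p.1, ¬ G.Adj u v) ∧ (∀ u ∈ p.2, ∀ v ∈ p.2, ¬ G.Adj u v)

/-- Pairs of sets without edges between them. -/
def CrossPair {V : Type*} (G : SimpleGraph V) (p : Finset V × Finset V) : Prop :=
  ∀ u ∈ p.1, ∀ v ∈ p.2, ¬ G.Adj u v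

/-- Zhao's swapping trick: independent sets of `G ⊔ G` versus `G × K₂`. -/
lemma swap_le {V : Type*} [Fintype V] (G : SimpleGraph V) (x : ℝ) (hx : 0 < x) :
    ∑ p ∈ univ.filter (IndPair G), x ^ (p.1.card + p.2.card)
      ≤ ∑ p ∈ univ.filter (CrossPair G), x ^ (p.1.card + p.2.card) := by
  let k : Finset V × Finset V → Finset V × Finset V := fun p => (p.1 ∩ p.2, p.1 ∪ p.2)
  have hw : ∀ p : Finset V × Finset V,
      x ^ (p.1.card + p.2.card) = x ^ ((k p).1.card + (k p).2.card) := by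
    intro p
    have := card_union_add_card_inter p.1 p.2
    congr 1
    simp only [k]
    omega
  rw [← sum_fiberwise (univ.filter (IndPair G)) k, ← sum_fiberwise (univ.filter (CrossPair G)) k]
  refine sum_le_sum fun q _ => ?_
  have hc : ∀ s : Finset (Finset V × Finset V),
      ∑ p ∈ s.filter (fun p => k p = q), x ^ (p.1.card + p.2.card)
        = (s.filter (fun p => k p = q)).card * x ^ (q.1.card + q.2.card) := by
    intro s
    rw [← nsmul_eq_mul, ← sum_const]
    refine sum_congr rfl fun p hp => ?_
    rw [hw p, (mem_filter.1 hp).2]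
  rw [hc, hc]
  refine mul_le_mul_of_nonneg_right ?_ (pow_pos hx _).le
  norm_cast
  rcases ((univ.filter (IndPair G)).filter (fun p => k p = q)).eq_empty_or_nonempty with h0 | h0
  · rw [h0]; simp
  obtain ⟨p0, hp0⟩ := h0
  obtain ⟨C, W⟩ := q
  obtain ⟨A0, B0⟩ := p0
  simp only [mem_filter, mem_univ, true_and, IndPair, k, Prod.mk.injEq] at hp0
  obtain ⟨⟨hA0, hB0⟩, hC0, hW0⟩ := hp0
  have hC0' : ∀ v, v ∈ C ↔ v ∈ A0 ∧ v ∈ B0 := fun v => by rw [← hC0]; simp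
  have hW0' : ∀ v, v ∈ W ↔ v ∈ A0 ∨ v ∈ B0 := fun v => by rw [← hW0]; simp
  let φ : Finset V × Finset V → Finset V × Finset V := fun p =>
    (W.filter (fun v => v ∈ C ∨ ¬ (v ∈ p.1 ↔ v ∈ A0)), W.filter (fun v => v ∈ C ∨ (v ∈ p.1 ↔ v ∈ A0)))
  refine card_le_card_of_injOn φ ?_ ?_
  · rintro ⟨A, B⟩ hp
    simp only [mem_coe, mem_filter, mem_univ, true_and, IndPair, k, Prod.mk.injEq] at hp
    obtain ⟨⟨hA, hB⟩, hC, hW⟩ := hp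
    have hC' : ∀ v, v ∈ C ↔ v ∈ A ∧ v ∈ B := fun v => by rw [← hC]; simp
    have hW' : ∀ v, v ∈ W ↔ v ∈ A ∨ v ∈ B := fun v => by rw [← hW]; simp
    simp only [mem_coe, mem_filter, mem_univ, true_and, CrossPair, k, Prod.mk.injEq, φ]
    refine ⟨?_, ?_, ?_⟩
    · rintro u ⟨huW, hu⟩ v ⟨hvW, hv⟩ hadj
      have a1 := hA u
      have a2 := hB u
      have a3 := hA0 u
      have a4 := hB0 u
      have b1 : u ∈ A → v ∈ A → False := fun h h' => hA u h v h' hadj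
      have b2 : u ∈ B → v ∈ B → False := fun h h' => hB u h v h' hadj
      have b3 : u ∈ A0 → v ∈ A0 → False := fun h h' => hA0 u h v h' hadj
      have b4 : u ∈ B0 → v ∈ B0 → False := fun h h' => hB0 u h v h' hadj
      have c1 := hC' u
      have c2 := hC' v
      have c3 := hC0' u
      have c4 := hC0' v
      have d1 := hW' u
      have d2 := hW' v
      have d3 := hW0' u
      have d4 := hW0' v
      clear a1 a2 a3 a4 hA hB hA0 hB0 hC hW hC0 hW0 hC' hW' hC0' hW0'
      grind
    · ext v
      have := hC' v
      have := hW' v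
      simp only [mem_inter, mem_filter]
      grind
    · ext v
      simp only [mem_union, mem_filter]
      grind
  · rintro ⟨A, B⟩ hp ⟨A', B'⟩ hp' heq
    simp only [mem_coe, mem_filter, mem_univ, true_and, IndPair, k, Prod.mk.injEq] at hp hp'
    obtain ⟨_, hC, hW⟩ := hp
    obtain ⟨_, hC', hW'⟩ := hp'
    simp only [φ, Prod.mk.injEq] at heq
    have e1 : ∀ v, (v ∈ W ∧ (v ∈ C ∨ ¬ (v ∈ A ↔ v ∈ A0))) ↔
        (v ∈ W ∧ (v ∈ C ∨ ¬ (v ∈ A' ↔ v ∈ A0))) := fun v => by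
      have := Finset.ext_iff.1 heq.1 v
      simpa only [mem_filter] using this
    have m1 : ∀ v, v ∈ C ↔ v ∈ A ∧ v ∈ B := fun v => by rw [← hC]; simp
    have m2 : ∀ v, v ∈ W ↔ v ∈ A ∨ v ∈ B := fun v => by rw [← hW]; simp
    have m3 : ∀ v, v ∈ C ↔ v ∈ A' ∧ v ∈ B' := fun v => by rw [← hC']; simp
    have m4 : ∀ v, v ∈ W ↔ v ∈ A' ∨ v ∈ B' := fun v => by rw [← hW']; simp
    refine Prod.ext ?_ ?_
    all_goals
      ext v
      have := e1 v
      have := m1 v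
      have := m2 v
      have := m3 v
      have := m4 v
      clear e1 m1 m2 m3 m4 heq hC hW hC' hW'
      simp only
      grind

lemma indepPoly_sq {V : Type*} [Fintype V] (G : SimpleGraph V) (x : ℝ) :
    indepPoly G x ^ 2 = ∑ p ∈ univ.filter (IndPair G), x ^ (p.1.card + p.2.card) := by
  unfold indepPoly
  rw [sq, sum_mul_sum, ← sum_product']
  refine sum_congr ?_ fun p _ => (pow_add _ _ _).symm
  ext p
  simp [IndPair]

lemma sum_pow_powerset {V : Type*} (s : Finset V) (x : ℝ) :
    ∑ B ∈ s.powerset, x ^ B.card = (1 + x) ^ s.card := by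
  have := Finset.sum_pow_mul_eq_add_pow x 1 s
  simp only [one_pow, mul_one] at this
  rw [this, add_comm]

lemma cross_eq {V : Type*} [Fintype V] (G : SimpleGraph V) (x : ℝ) :
    ∑ p ∈ univ.filter (CrossPair G), x ^ (p.1.card + p.2.card)
      = ∑ A ∈ (univ : Finset V).powerset,
        x ^ A.card * (1 + x) ^ (univ.filter fun v => A ∩ univ.filter (G.Adj v) = ∅).card := by
  rw [sum_filter, Fintype.sum_prod_type, powerset_univ]
  refine sum_congr rfl fun A _ => ?_
  rw [← sum_filter, ← sum_pow_powerset, mul_sum]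
  refine sum_congr ?_ fun B _ => pow_add _ _ _
  ext B
  rw [mem_filter]
  simp only [mem_filter, mem_univ, true_and, CrossPair, mem_powerset, subset_iff,
    Finset.ext_iff, mem_inter, notMem_empty, iff_false, not_and]
  constructor
  · intro h v hv u hu hadj; exact h u hu v hv hadj.symm
  · intro h u hu v hv hadj; exact h hv u hu hadj.symm

lemma main_bound {V : Type*} [Fintype V] (G : SimpleGraph V) (d : ℕ) (hd : 1 ≤ d)
    (hreg : ∀ v, (univ.filter (G.Adj v)).card = d) (x : ℝ) (hx : 0 < x) :
    indepPoly G x ^ 2 ≤ ((2 * (1 + x) ^ d - 1) ^ (1 / (d : ℝ))) ^ (Fintype.card V) := by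
  rw [indepPoly_sq]
  refine (swap_le G x hx).trans ?_
  rw [cross_eq]
  have hd0 : (0 : ℝ) < d := by exact_mod_cast hd
  have h1x : (0 : ℝ) < 1 + x := by linarith
  let g : V → Finset V → ℝ := fun _ S => if S = ∅ then (1 + x) ^ d else 1
  have hF := finner d hd x hx (univ : Finset V) (fun v => univ.filter (G.Adj v)) g
    (fun _ => subset_univ _)
    (fun i S => by simp only [g]; split_ifs <;> positivity)
    (fun v _ => by
      rw [← hreg v]
      congr 1
      ext w
      simp [G.adj_comm])
  have hr : ((1 + x) ^ d) ^ (1 / (d : ℝ)) = 1 + x := by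
    rw [← Real.rpow_natCast, ← Real.rpow_mul h1x.le, mul_one_div_cancel hd0.ne', Real.rpow_one]
  have hN : ∀ v : V, ∑ S ∈ (univ.filter (G.Adj v)).powerset, x ^ S.card * g v S
      = 2 * (1 + x) ^ d - 1 := by
    intro v
    have e : ∀ S : Finset V, x ^ S.card * g v S
        = x ^ S.card + if S = ∅ then (1 + x) ^ d - 1 else 0 := by
      intro S
      simp only [g]
      split_ifs with h
      · subst h; simp
      · simp
    simp only [e]
    rw [sum_add_distrib, sum_pow_powerset, hreg, sum_ite_eq' , if_pos (empty_mem_powerset _)]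
    ring
  simp only [hN, prod_const, card_univ] at hF
  refine le_trans (le_of_eq ?_) hF
  refine sum_congr rfl fun A _ => ?_
  congr 1
  rw [← prod_const, prod_filter]
  refine prod_congr rfl fun v _ => ?_
  simp only [g]
  split_ifs
  · exact hr.symm
  · simp

/-- For every $d$-regular graph $G$ on $n$ vertices and $\lambda>0$,
$(1/n)\log P_G(\lambda) \le (1/(2d))\log(2(1+\lambda)^d-1)$, the latter being the
normalized log independence polynomial of $K_{d,d}$. -/
theorem normalized_log_indepPoly_le {V : Type*} [Fintype V] (G : SimpleGraph V) (d : ℕ)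
    (hd : 1 ≤ d) (hreg : G.IsRegularOfDegree d) (x : ℝ) (hx : 0 < x) :
    (1 / (Fintype.card V : ℝ)) * Real.log (indepPoly G x)
      ≤ (1 / (2 * d : ℝ)) * Real.log (2 * (1 + x) ^ d - 1) := by
  have hreg' : ∀ v, (univ.filter (G.Adj v)).card = d := by
    intro v
    rw [← hreg v, ← SimpleGraph.card_neighborFinset_eq_degree]
    congr 1
    ext w
    simp
  have hb := main_bound G d hd hreg' x hx
  have hd0 : (0 : ℝ) < d := by exact_mod_cast hd
  have hK : 1 ≤ 2 * (1 + x) ^ d - 1 := by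
    have : 1 ≤ (1 + x) ^ d := one_le_pow₀ (by linarith)
    linarith
  have hlog := Real.log_nonneg hK
  have hP : 0 < indepPoly G x := by
    unfold indepPoly
    exact sum_pos (fun s _ => pow_pos hx _) ⟨∅, by simp⟩
  have hl := Real.log_le_log (pow_pos hP 2) hb
  rw [Real.log_pow, Real.log_pow, Real.log_rpow (by linarith)] at hl
  rcases Nat.eq_zero_or_pos (Fintype.card V) with h0 | h0
  · rw [h0]
    simp only [Nat.cast_zero, div_zero, zero_mul]
    positivity
  · have hn : (0 : ℝ) < Fintype.card V := by exact_mod_cast h0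
    rw [one_div_mul_eq_div, div_le_iff₀ hn]
    push_cast at hl
    have : 1 / (2 * (d : ℝ)) * Real.log (2 * (1 + x) ^ d - 1) * (Fintype.card V)
        = (Fintype.card V * (1 / (d : ℝ) * Real.log (2 * (1 + x) ^ d - 1))) / 2 := by
      field_simp
    rw [this]
    linarith
end

section
/- For every d-regular graph G on n vertices and every λ > 0, (1/|E(G)|) log M_G(λ) ≤ (1/d²) log M_{K_{d,d}}(λ), where M denotes the matching polynomial. -/
open Finset
open scoped Classical

/-- The finset of matchings of a graph, viewed as finsets of edges that are
pairwise vertex-disjoint (the empty matching included). -/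
noncomputable def matchingsFinset {V : Type*} [Fintype V] [DecidableEq V]
    (G : SimpleGraph V) : Finset (Finset (Sym2 V)) :=
  Finset.univ.powerset.filter (fun M : Finset (Sym2 V) =>
    (∀ e ∈ M, e ∈ G.edgeSet) ∧ ∀ e ∈ M, ∀ f ∈ M, e ≠ f → ∀ v : V, v ∈ e → v ∉ f)

/-- The matching polynomial of a graph: the sum of `x ^ |H|` over all matchings
`H` (including the empty matching). -/
noncomputable def matchingPoly {V : Type*} [Fintype V] [DecidableEq V]
    (G : SimpleGraph V) (x : ℝ) : ℝ :=
  ∑ M ∈ matchingsFinset G, x ^ M.card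

/-- Expected-inverse-union coefficients, given by a first order recursion. -/
noncomputable def mpP (D : ℕ) : ℕ → ℕ → ℝ
  | 0, _ => 0
  | (i + 1), s => (1 - (i : ℝ) ^ 2 * mpP D i s) / (((i : ℝ) + s) * ((D : ℝ) - i))

theorem mpP_rec (D i s : ℕ) (hi : i < D) (hs : 1 ≤ s) :
    ((i : ℝ) + s) * ((D : ℝ) - i) * mpP D (i + 1) s = 1 - (i : ℝ) ^ 2 * mpP D i s := by
  have h1 : (0 : ℝ) < (i : ℝ) + s := by positivity
  have h2 : (0 : ℝ) < (D : ℝ) - i := by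
    have : (i : ℝ) < D := by exact_mod_cast hi
    linarith
  rw [mpP]
  field_simp

theorem mpP_one (D s : ℕ) : mpP D 1 s = 1 / ((D : ℝ) * s) := by
  simp [mpP]; ring

theorem mpP_rec' (D s : ℕ) (hs : 1 ≤ s) (i : ℕ) (hi : i + 1 ≤ D) :
    ((i : ℝ) + 1 + s) * ((D : ℝ) - s) * mpP D (i + 1) (s + 1)
      = 1 - (s : ℝ) ^ 2 * mpP D (i + 1) s := by
  induction i with
  | zero =>
    have hs' : (0 : ℝ) < s := by exact_mod_cast hs
    have hD : (0 : ℝ) < D := by exact_mod_cast hi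
    simp only [zero_add, mpP_one]
    push_cast
    field_simp
    ring
  | succ i ih =>
    have ih := ih (by omega)
    have e1 := mpP_rec D (i + 1) s (by omega) hs
    have e2 := mpP_rec D (i + 1) (s + 1) (by omega) (by omega)
    have hs' : (0 : ℝ) < s := by exact_mod_cast hs
    have hD : (0 : ℝ) < (D : ℝ) - (i + 1) := by
      have : ((i + 1 : ℕ) : ℝ) < D := by exact_mod_cast hi
      push_cast at this
      linarith
    push_cast at *
    set a := mpP D (i + 1 + 1) s
    set b := mpP D (i + 1 + 1) (s + 1)
    set c := mpP D (i + 1) s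
    set e := mpP D (i + 1) (s + 1)
    have h3 : ((D : ℝ) - (i + 1)) * ((i : ℝ) + 1 + s) ≠ 0 := by positivity
    apply mul_left_cancel₀ h3
    linear_combination ((D : ℝ) - s) * ((i : ℝ) + 1 + s) * e2 - (i + 1 : ℝ) ^ 2 * ih + (s : ℝ) ^ 2 * e1

theorem mpP_s_one (D i : ℕ) (hi : i + 1 ≤ D) :
    mpP D (i + 1) 1 = 1 / ((D : ℝ) * (i + 1)) := by
  induction i with
  | zero => simp [mpP_one]
  | succ i ih =>
    have ih := ih (by omega)
    have e1 := mpP_rec D (i + 1) 1 (by omega) le_rfl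
    have hD0 : (0 : ℝ) < D := by exact_mod_cast (by omega : 0 < D)
    have hD : (0 : ℝ) < (D : ℝ) - (i + 1) := by
      have : ((i + 1 : ℕ) : ℝ) < D := by exact_mod_cast hi
      push_cast at this
      linarith
    rw [ih] at e1
    push_cast at *
    have h3 : ((i : ℝ) + 1 + 1) * ((D : ℝ) - (i + 1)) ≠ 0 := by positivity
    apply mul_left_cancel₀ h3
    rw [e1]
    field_simp

theorem mpP_i_top (D s : ℕ) (hs : s + 1 ≤ D) : mpP D D (s + 1) = 1 / (D : ℝ) ^ 2 := by
  obtain ⟨i, rfl⟩ : ∃ i, D = i + 1 := ⟨D - 1, by omega⟩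
  induction s with
  | zero => rw [mpP_s_one _ _ le_rfl]; push_cast; field_simp
  | succ s ih =>
    have ih := ih (by omega)
    have e := mpP_rec' (i + 1) (s + 1) (by omega) i le_rfl
    rw [ih] at e
    have hD : (0 : ℝ) < (i : ℝ) + 1 - (s + 1) := by
      have : ((s + 1 : ℕ) : ℝ) < (i + 1 : ℕ) := by exact_mod_cast hs
      push_cast at this
      linarith
    push_cast at *
    have h3 : ((i : ℝ) + 1 + (s + 1)) * ((i : ℝ) + 1 - (s + 1)) ≠ 0 := by positivity
    apply mul_left_cancel₀ h3
    rw [e]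
    field_simp
    ring

theorem mpP_s_top (D i : ℕ) (hi : i + 1 ≤ D) : mpP D (i + 1) D = 1 / (D : ℝ) ^ 2 := by
  have e := mpP_rec' D D (by omega) i hi
  have hD0 : (0 : ℝ) < D := by exact_mod_cast (by omega : 0 < D)
  have : (D : ℝ) ^ 2 * mpP D (i + 1) D = 1 := by linarith
  field_simp
  linarith

/-- The antidiagonal relation. -/
theorem mpP_anti (D i s : ℕ) (hi : i ≤ D) (hs : s ≤ D) :
    ((D : ℝ) - i) * (s : ℝ) ^ 2 * mpP D (i + 1) s - ((D : ℝ) - s) * (i : ℝ) ^ 2 * mpP D i (s + 1)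
      = if s = 0 then -(D : ℝ) * (i : ℝ) ^ 2 * mpP D i 1 else (s : ℝ) - i := by
  split_ifs with h0
  · subst h0; simp
  have hs1 : 1 ≤ s := by omega
  have hs' : (0 : ℝ) < s := by exact_mod_cast hs1
  rcases Nat.eq_zero_or_pos i with rfl | hi0
  · rcases Nat.eq_zero_or_pos D with rfl | hD
    · omega
    have hD' : (0 : ℝ) < D := by exact_mod_cast hD
    simp [mpP_one]
    field_simp
  obtain ⟨j, rfl⟩ : ∃ j, i = j + 1 := ⟨i - 1, by omega⟩
  rcases hi.lt_or_eq with hlt | heq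
  · have e1 := mpP_rec D (j + 1) s hlt hs1
    have e2 := mpP_rec' D s hs1 j hi
    push_cast at *
    have h3 : ((j : ℝ) + 1 + s) ≠ 0 := by positivity
    apply mul_left_cancel₀ h3
    linear_combination (s : ℝ) ^ 2 * e1 - ((j : ℝ) + 1) ^ 2 * e2
  · rcases hs.lt_or_eq with hlt' | heq'
    · have e := mpP_i_top D s hlt'
      have hD' : (0 : ℝ) < D := by exact_mod_cast (by omega)
      rw [heq, e]
      field_simp
      ring
    · rw [heq, heq']; simp

/-- The polynomial comparing the bounds at two antidiagonal neighbours. -/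
theorem mp_poly_up (D i s : ℕ) (h1 : i + 1 ≤ s) (h2 : s ≤ D) :
    ((s : ℝ) - i) * (i + 1) * ((i + 1) * (D + 1) + s * (D - (i + 1))) * (i * (D + 1) + (s + 1) * (D - i))
      + i * (i + 1) * (i + 1) * (D - s) * ((i + 1) * (D + 1) + s * (D - (i + 1)))
    ≤ (s : ℝ) ^ 2 * (D - i) * (i + 2) * (i * (D + 1) + (s + 1) * (D - i)) := by
  obtain ⟨k, rfl⟩ := Nat.exists_eq_add_of_le h1
  obtain ⟨r, rfl⟩ := Nat.exists_eq_add_of_le h2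
  rw [← sub_nonneg]
  push_cast
  ring_nf
  positivity

theorem mp_poly_down (D i s : ℕ) (h0 : 1 ≤ s) (h1 : s ≤ i + 1) (h2 : i ≤ D) :
    (s : ℝ) ^ 2 * (D - i) * (i + 2) * (i * (D + 1) + (s + 1) * (D - i)) ≤
    ((s : ℝ) - i) * (i + 1) * ((i + 1) * (D + 1) + s * (D - (i + 1))) * (i * (D + 1) + (s + 1) * (D - i))
      + i * (i + 1) * (i + 1) * (D - s) * ((i + 1) * (D + 1) + s * (D - (i + 1))) := by
  obtain ⟨a, rfl⟩ := Nat.exists_eq_add_of_le h0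
  obtain ⟨b, hb⟩ := Nat.exists_eq_add_of_le h1
  obtain rfl : i = a + b := by omega
  obtain ⟨r, rfl⟩ := Nat.exists_eq_add_of_le h2
  rw [← sub_nonneg]
  push_cast
  ring_nf
  positivity

theorem mp_bound_upper (D i : ℕ) : ∀ s : ℕ, i + 1 ≤ s → s ≤ D →
    ((i : ℝ) + 1) * ((i + 1) * (D + 1) + s * (D - (i + 1))) * mpP D (i + 1) s ≤ i + 2 := by
  induction i with
  | zero =>
    intro s h1 h2
    have hs : (1 : ℝ) ≤ s := by exact_mod_cast h1
    have hD : (1 : ℝ) ≤ D := by exact_mod_cast h1.trans h2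
    simp only [zero_add, mpP_one]
    rw [mul_one_div, div_le_iff₀ (by positivity)]
    push_cast
    nlinarith [mul_nonneg (by linarith : (0 : ℝ) ≤ D) (by linarith : (0 : ℝ) ≤ s - 1)]
  | succ i ih =>
    intro s h1 h2
    rcases h2.lt_or_eq with hlt | heq
    · have ih := ih (s + 1) (by omega) hlt
      have e := mpP_anti D (i + 1) s (by omega) h2
      rw [if_neg (by omega)] at e
      have pu := mp_poly_up D (i + 1) s h1 h2
      have hDi : (0 : ℝ) < (D : ℝ) - (i + 1) := by
        have : ((i + 1 : ℕ) : ℝ) < D := by exact_mod_cast (by omega)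
        push_cast at this
        linarith
      have hDi2 : (0 : ℝ) ≤ (D : ℝ) - (i + 1 + 1) := by
        have : ((i + 1 + 1 : ℕ) : ℝ) ≤ D := by exact_mod_cast (by omega)
        push_cast at this
        linarith
      have hDs : (0 : ℝ) < (D : ℝ) - s := by
        have : (s : ℝ) < D := by exact_mod_cast hlt
        linarith
      have hs : (0 : ℝ) < s := by exact_mod_cast (by omega)
      push_cast at *
      set P := mpP D (i + 1) (s + 1)
      set P' := mpP D (i + 1 + 1) s
      set q : ℝ := ((i : ℝ) + 1) * (D + 1) + (s + 1) * (D - (i + 1)) with hq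
      set p : ℝ := ((i : ℝ) + 1 + 1) * (D + 1) + s * (D - (i + 1 + 1)) with hp
      have hq0 : 0 < q := by positivity
      have hp0 : 0 < p := by positivity
      have h3 : 0 < (s : ℝ) ^ 2 * (D - (i + 1)) * q := by positivity
      refine le_of_mul_le_mul_left ?_ h3
      have h4 : 0 ≤ ((i : ℝ) + 1 + 1) * p * (D - s) * (i + 1) := by positivity
      have h5 := mul_le_mul_of_nonneg_left ih h4
      have h6 : (s : ℝ) ^ 2 * (D - (i + 1)) * q * (((i : ℝ) + 1 + 1) * p * P')
          = (s - ((i : ℝ) + 1)) * (i + 1 + 1) * p * q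
            + ((i : ℝ) + 1 + 1) * p * (D - s) * (i + 1) * (((i : ℝ) + 1) * q * P) := by
        linear_combination ((i : ℝ) + 1 + 1) * p * q * e
      rw [h6]
      linarith
    · rw [heq, mpP_s_top D (i + 1) (by omega)]
      have hDi : (0 : ℝ) ≤ (D : ℝ) - (i + 1 + 1) := by
        have : ((i + 1 + 1 : ℕ) : ℝ) ≤ D := by exact_mod_cast (by omega)
        push_cast at this
        linarith
      have hD : (0 : ℝ) < D := by exact_mod_cast (by omega)
      rw [mul_one_div, div_le_iff₀ (by positivity)]
      push_cast
      nlinarith [mul_nonneg hDi (by positivity : (0 : ℝ) ≤ D + (i + 1 + 1))]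

theorem mp_bound_lower (D s : ℕ) : ∀ i : ℕ, s ≤ i → i + 1 ≤ D →
    ((i : ℝ) + 1) * ((i + 1) * (D + 1) + (s + 1) * (D - (i + 1))) * mpP D (i + 1) (s + 1) ≤ i + 2 := by
  induction s with
  | zero =>
    intro i h1 h2
    have hD : (1 : ℝ) ≤ D := by exact_mod_cast (by omega : 1 ≤ D)
    simp only [zero_add, mpP_s_one D i h2]
    rw [mul_one_div, div_le_iff₀ (by positivity)]
    push_cast
    nlinarith
  | succ s ih =>
    intro i h1 h2
    rcases h2.lt_or_eq with hlt | heq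
    · have ih := ih (i + 1) (by omega) hlt
      have e := mpP_anti D (i + 1) (s + 1) (by omega) (by omega)
      rw [if_neg (by omega)] at e
      have pu := mp_poly_down D (i + 1) (s + 1) (by omega) (by omega) h2
      have hDi2 : (0 : ℝ) ≤ (D : ℝ) - (i + 1 + 1) := by
        have : ((i + 1 + 1 : ℕ) : ℝ) ≤ D := by exact_mod_cast (by omega)
        push_cast at this
        linarith
      have hDi : (0 : ℝ) < (D : ℝ) - (i + 1) := by linarith
      have hDs : (0 : ℝ) < (D : ℝ) - (s + 1) := by
        have : ((s + 1 : ℕ) : ℝ) < D := by exact_mod_cast (by omega)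
        push_cast at this
        linarith
      push_cast at *
      set P := mpP D (i + 1) (s + 1 + 1)
      set P' := mpP D (i + 1 + 1) (s + 1)
      set q : ℝ := ((i : ℝ) + 1) * (D + 1) + (s + 1 + 1) * (D - (i + 1)) with hq
      set p : ℝ := ((i : ℝ) + 1 + 1) * (D + 1) + (s + 1) * (D - (i + 1 + 1)) with hp
      have hq0 : 0 < q := by positivity
      have hp0 : 0 < p := by positivity
      have h4 : 0 < ((i : ℝ) + 1 + 1) * p * (D - (s + 1)) * (i + 1) := by positivity
      refine le_of_mul_le_mul_left ?_ h4
      have h3 : 0 ≤ ((s : ℝ) + 1) ^ 2 * (D - (i + 1)) * q := by positivity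
      have h5 := mul_le_mul_of_nonneg_left ih h3
      have h6 : ((i : ℝ) + 1 + 1) * p * (D - (s + 1)) * (i + 1) * ((i + 1) * q * P)
          = ((s : ℝ) + 1) ^ 2 * (D - (i + 1)) * q * ((i + 1 + 1) * p * P')
            - ((s : ℝ) + 1 - (i + 1)) * (i + 1 + 1) * p * q := by
        linear_combination -((i : ℝ) + 1 + 1) * p * q * e
      rw [h6]
      linarith
    · have ht := mpP_i_top D (s + 1) (by omega)
      rw [heq, ht]
      have hD : (0 : ℝ) < D := by exact_mod_cast (by omega)
      have hi : (i : ℝ) + 1 = D := by exact_mod_cast heq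
      rw [mul_one_div, div_le_iff₀ (by positivity)]
      rw [hi]
      have : (i : ℝ) + 2 = D + 1 := by linarith
      rw [this]
      apply le_of_eq
      ring

theorem mpP_mono (D i s : ℕ) (hi : i < D) (hs : s ≤ D) (hs1 : 1 ≤ s) :
    (i : ℝ) * mpP D i s ≤ ((i : ℝ) + 1) * mpP D (i + 1) s := by
  have hs' : (0 : ℝ) < s := by exact_mod_cast hs1
  rcases Nat.eq_zero_or_pos i with rfl | h0
  · simp [mpP_one]; positivity
  obtain ⟨j, rfl⟩ : ∃ j, i = j + 1 := ⟨i - 1, by omega⟩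
  have hb : ((j : ℝ) + 1) * ((j + 1) * (D + 1) + s * (D - (j + 1))) * mpP D (j + 1) s ≤ j + 2 := by
    rcases le_or_gt (j + 1) s with h | h
    · exact mp_bound_upper D j s h hs
    · obtain ⟨t, rfl⟩ : ∃ t, s = t + 1 := ⟨s - 1, by omega⟩
      have := mp_bound_lower D t j (by omega) (by omega)
      push_cast
      exact this
  have e := mpP_rec D (j + 1) s hi hs1
  have hD : (0 : ℝ) < (D : ℝ) - (j + 1) := by
    have : ((j + 1 : ℕ) : ℝ) < D := by exact_mod_cast hi
    push_cast at this
    linarith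
  push_cast at *
  have h3 : 0 < ((j : ℝ) + 1 + s) * ((D : ℝ) - (j + 1)) := by positivity
  refine le_of_mul_le_mul_left ?_ h3
  have : ((j : ℝ) + 1 + s) * ((D : ℝ) - (j + 1)) * ((j + 1 + 1) * mpP D (j + 1 + 1) s)
      = (j + 1 + 1) * (1 - ((j : ℝ) + 1) ^ 2 * mpP D (j + 1) s) := by rw [← e]; ring
  rw [this]
  linarith

/-- Weights for `K_{D+1,D+1}`. -/
noncomputable def mpw (D : ℕ) (x : ℝ) (s : ℕ) : ℝ :=
  ((D.choose s) ^ 2 * (D - s).factorial : ℝ) * x ^ (D - s)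

noncomputable def mpW (D : ℕ) (x : ℝ) : ℝ := ∑ s ∈ Finset.range (D + 1), mpw D x s

noncomputable def mpK (d : ℕ) (x : ℝ) : ℝ :=
  ∑ k ∈ Finset.range (d + 1), ((d.choose k) ^ 2 * k.factorial : ℝ) * x ^ k

noncomputable def mpX (D : ℕ) (x : ℝ) (i : ℕ) : ℝ :=
  x * i * ∑ s ∈ Finset.range (D + 1), mpw D x s * (s : ℝ) ^ 2 * mpP D i s

theorem mpw_nonneg (D : ℕ) (x : ℝ) (hx : 0 ≤ x) (s : ℕ) : 0 ≤ mpw D x s := by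
  unfold mpw; positivity

theorem mpX_mono (D : ℕ) (x : ℝ) (hx : 0 ≤ x) (i : ℕ) (hi : i < D) :
    mpX D x i ≤ mpX D x (i + 1) := by
  unfold mpX
  rw [mul_assoc, mul_assoc]
  apply mul_le_mul_of_nonneg_left _ hx
  rw [Finset.mul_sum, Finset.mul_sum]
  apply Finset.sum_le_sum
  intro s hs
  rcases Nat.eq_zero_or_pos s with rfl | h0
  · simp
  have := mpP_mono D i s hi (by simp at hs; omega) h0
  have hw := mpw_nonneg D x hx s
  have := mul_le_mul_of_nonneg_left this (by positivity : 0 ≤ mpw D x s * (s : ℝ) ^ 2)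
  push_cast
  linarith

theorem mp_choose_succ (D m : ℕ) :
    (D.choose (m + 1) : ℝ) * (m + 1) = D.choose m * ((D : ℝ) - m) := by
  rcases le_or_gt m D with h | h
  · have := Nat.choose_succ_right_eq D m
    have h2 : ((D.choose (m + 1) * (m + 1) : ℕ) : ℝ) = (D.choose m * (D - m) : ℕ) := by rw [this]
    push_cast [Nat.cast_sub h] at h2
    exact h2
  · rw [Nat.choose_eq_zero_of_lt h, Nat.choose_eq_zero_of_lt (by omega)]; simp

theorem mpw_succ (D : ℕ) (x : ℝ) (s : ℕ) (hs : s < D) :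
    x * mpw D x (s + 1) * ((s + 1 : ℕ) : ℝ) ^ 2 = mpw D x s * ((D : ℝ) - s) := by
  have h := mp_choose_succ D s
  obtain ⟨r, rfl⟩ : ∃ r, D = s + 1 + r := ⟨D - s - 1, by omega⟩
  unfold mpw
  rw [show s + 1 + r - (s + 1) = r by omega, show s + 1 + r - s = r + 1 by omega,
    Nat.factorial_succ]
  push_cast at *
  set p : ℝ := ((s + 1 + r).choose s : ℝ)
  set q : ℝ := ((s + 1 + r).choose (s + 1) : ℝ)
  have h' : q * (s + 1) = p * (r + 1) := by rw [h]; ring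
  linear_combination (x ^ (r + 1) * r.factorial * (q * (s + 1) + p * (r + 1))) * h'

theorem mp_sum_shift (D : ℕ) (x : ℝ) (f : ℕ → ℝ) :
    x * ∑ s ∈ Finset.range (D + 1), mpw D x s * (s : ℝ) ^ 2 * f s
      = ∑ s ∈ Finset.range (D + 1), mpw D x s * ((D : ℝ) - s) * f (s + 1) := by
  rw [Finset.sum_range_succ', Finset.sum_range_succ]
  simp only [sub_self, mul_zero, zero_mul, add_zero, Nat.cast_zero, ne_eq, OfNat.ofNat_ne_zero,
    not_false_eq_true, zero_pow]
  rw [Finset.mul_sum]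
  apply Finset.sum_congr rfl
  intro s hs
  rw [← mpw_succ D x s (by simpa using hs)]
  ring

theorem mpK_eq (D : ℕ) (x : ℝ) :
    mpK (D + 1) x = mpW D x * (1 + (D + 1) * x)
      + x * ∑ s ∈ Finset.range (D + 1), mpw D x s * (s : ℝ) := by
  have e1 : mpW D x = ∑ m ∈ Finset.range (D + 1), ((D.choose m) ^ 2 * m.factorial : ℝ) * x ^ m := by
    unfold mpW
    rw [← Finset.sum_range_reflect]
    apply Finset.sum_congr rfl
    intro m hm
    simp only [Finset.mem_range] at hm
    unfold mpw
    rw [show D - (D + 1 - 1 - m) = m by omega, show D + 1 - 1 - m = D - m by omega,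
      Nat.choose_symm (by omega)]
  have e2 : ∑ s ∈ Finset.range (D + 1), mpw D x s * (s : ℝ)
      = ∑ m ∈ Finset.range (D + 1), ((D.choose m) ^ 2 * m.factorial : ℝ) * x ^ m * ((D : ℝ) - m) := by
    rw [← Finset.sum_range_reflect]
    apply Finset.sum_congr rfl
    intro m hm
    simp only [Finset.mem_range] at hm
    unfold mpw
    rw [show D - (D + 1 - 1 - m) = m by omega, show D + 1 - 1 - m = D - m by omega,
      Nat.choose_symm (by omega), Nat.cast_sub (by omega)]
  have e3 : mpW D x = ∑ m ∈ Finset.range (D + 1),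
      ((D.choose (m + 1)) ^ 2 * (m + 1).factorial : ℝ) * x ^ (m + 1) + 1 := by
    have : mpW D x = ∑ m ∈ Finset.range (D + 2), ((D.choose m) ^ 2 * m.factorial : ℝ) * x ^ m := by
      rw [Finset.sum_range_succ, e1]
      simp
    rw [this, Finset.sum_range_succ']
    simp
  have : mpW D x * (1 + (D + 1) * x) = mpW D x + mpW D x * ((D + 1) * x) := by ring
  rw [this]
  nth_rewrite 1 [e3]
  rw [e1, e2, mpK, Finset.sum_range_succ', Finset.sum_mul, Finset.mul_sum]
  simp only [Nat.choose_zero_right, Nat.factorial_zero, pow_zero, Nat.cast_one, one_pow, mul_one]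
  rw [add_right_comm _ (1 : ℝ), add_right_comm _ (1 : ℝ), ← Finset.sum_add_distrib,
    ← Finset.sum_add_distrib]
  congr 1
  apply Finset.sum_congr rfl
  intro m hm
  have h := mp_choose_succ D m
  rw [Nat.choose_succ_succ, Nat.factorial_succ]
  push_cast
  set p : ℝ := (D.choose m : ℝ)
  set q : ℝ := (D.choose (m + 1) : ℝ)
  linear_combination (2 * p * m.factorial * x ^ (m + 1)) * h

theorem mpX_rec (D : ℕ) (x : ℝ) (i : ℕ) (hi : i ≤ D) :
    ((D : ℝ) - i) * mpX D x (i + 1)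
      = (i + 1) * (mpK (D + 1) x - mpW D x * (1 + (D + 1) * x) + i * x * (mpX D x i - mpW D x)) := by
  have hX : mpX D x i = i * ∑ s ∈ Finset.range (D + 1), mpw D x s * ((D : ℝ) - s) * mpP D i (s + 1) := by
    rw [← mp_sum_shift, mpX]; ring
  rw [hX, mpK_eq, mpX, mpW]
  push_cast
  have key : ∑ s ∈ Finset.range (D + 1), (mpw D x s * (s : ℝ) ^ 2 * mpP D (i + 1) s * ((D : ℝ) - i))
      = ∑ s ∈ Finset.range (D + 1), (mpw D x s * (s : ℝ)
        + (i : ℝ) ^ 2 * (mpw D x s * ((D : ℝ) - s) * mpP D i (s + 1)) - i * mpw D x s) := by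
    apply Finset.sum_congr rfl
    intro s hs
    have hs : s ≤ D := by simp at hs; omega
    have h := mpP_anti D i s hi hs
    by_cases h0 : s = 0
    · subst h0
      rcases Nat.eq_zero_or_pos i with rfl | hi0
      · simp
      obtain ⟨j, rfl⟩ : ∃ j, i = j + 1 := ⟨i - 1, by omega⟩
      rw [mpP_s_one D j hi]
      have hD : (0 : ℝ) < D := by exact_mod_cast (by omega)
      push_cast
      field_simp
      ring
    · rw [if_neg h0] at h
      linear_combination (mpw D x s) * h
  rw [← Finset.sum_mul, Finset.sum_sub_distrib, Finset.sum_add_distrib, ← Finset.mul_sum,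
    ← Finset.mul_sum] at key
  linear_combination x * (i + 1) * key

/-- The dual multipliers (times their index). -/
noncomputable def mph (D : ℕ) (x : ℝ) (t : ℕ) : ℝ := -mpX D x t - mpW D x * x * t

noncomputable def mpL (D : ℕ) (x : ℝ) (t : ℕ) : ℝ := mph D x t / t

theorem mpL_mul (D : ℕ) (x : ℝ) (t : ℕ) : (t : ℝ) * mpL D x t = mph D x t := by
  unfold mpL
  rcases Nat.eq_zero_or_pos t with rfl | h
  · simp [mph, mpX]
  · have : (0 : ℝ) < t := by exact_mod_cast h
    field_simp

theorem mpL_rec (D : ℕ) (x : ℝ) (i : ℕ) (hi : i ≤ D) :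
    ((D : ℝ) - i) * mpL D x (i + 1)
      = -(mpK (D + 1) x - mpW D x * (1 + (D + 1) * x) + i * x * (mpX D x i - mpW D x))
        - mpW D x * x * (D - i) := by
  have h := mpX_rec D x i hi
  have h2 := mpL_mul D x (i + 1)
  unfold mph at h2
  push_cast at h2
  have : (0 : ℝ) < (i : ℝ) + 1 := by positivity
  apply mul_left_cancel₀ this.ne'
  linear_combination ((D : ℝ) - i) * h2 - h

theorem mpX_monotone (D : ℕ) (x : ℝ) (hx : 0 ≤ x) (i j : ℕ) (hij : i ≤ j) (hj : j ≤ D) :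
    mpX D x i ≤ mpX D x j := by
  induction j, hij using Nat.le_induction with
  | base => exact le_rfl
  | succ j hj' ih => exact (ih (by omega)).trans (mpX_mono D x hx j (by omega))

theorem mp_local (D : ℕ) (x : ℝ) (hx : 0 ≤ x) (i j k : ℕ) (hi : i ≤ D) (hj : j ≤ D)
    (hki : k ≤ i) (hkj : k ≤ j) :
    mpK (D + 1) x
      + (1 / 2) * ((((D : ℝ) - i) * mpL D x (i + 1)
            - x * (((j : ℝ) - k) * mph D x i + k * mph D x (i - 1)))
          + (((D : ℝ) - j) * mpL D x (j + 1)
            - x * (((i : ℝ) - k) * mph D x j + k * mph D x (j - 1))))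
      ≤ mpW D x * (1 + ((i : ℝ) + j + 1) * x + ((i : ℝ) * j - k) * x ^ 2) := by
  rw [mpL_rec D x i hi, mpL_rec D x j hj]
  have e1 : (k : ℝ) * mph D x (i - 1) = k * (-mpX D x (i - 1) - mpW D x * x * ((i : ℝ) - 1)) := by
    rcases Nat.eq_zero_or_pos k with rfl | h
    · simp
    · rw [mph, Nat.cast_sub (by omega)]; simp
  have e2 : (k : ℝ) * mph D x (j - 1) = k * (-mpX D x (j - 1) - mpW D x * x * ((j : ℝ) - 1)) := by
    rcases Nat.eq_zero_or_pos k with rfl | h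
    · simp
    · rw [mph, Nat.cast_sub (by omega)]; simp
  rw [e1, e2, mph, mph]
  have m1 := mpX_monotone D x hx (i - 1) i (by omega) hi
  have m2 := mpX_monotone D x hx (j - 1) j (by omega) hj
  have m3 : 0 ≤ (mpX D x i - mpX D x j) * ((i : ℝ) - j) := by
    rcases le_total i j with h | h
    · have := mpX_monotone D x hx i j h hj
      have h' : (i : ℝ) ≤ j := by exact_mod_cast h
      exact mul_nonneg_of_nonpos_of_nonpos (by linarith) (by linarith)
    · have := mpX_monotone D x hx j i h hi
      have h' : (j : ℝ) ≤ i := by exact_mod_cast h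
      exact mul_nonneg (by linarith) (by linarith)
  have m4 : 0 ≤ x * k * (mpX D x i - mpX D x (i - 1)) :=
    mul_nonneg (by positivity) (by linarith)
  have m5 : 0 ≤ x * k * (mpX D x j - mpX D x (j - 1)) :=
    mul_nonneg (by positivity) (by linarith)
  have m6 := mul_nonneg hx m3
  linarith

theorem mpK_hasDerivAt (D : ℕ) (x : ℝ) :
    HasDerivAt (mpK (D + 1)) (((D : ℝ) + 1) ^ 2 * mpW D x) x := by
  have h : HasDerivAt (mpK (D + 1)) (∑ k ∈ Finset.range (D + 1 + 1),
      (((D + 1).choose k) ^ 2 * k.factorial : ℝ) * (k * x ^ (k - 1))) x := by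
    unfold mpK
    apply HasDerivAt.fun_sum
    intro k hk
    exact (hasDerivAt_pow k x).const_mul _
  convert h using 1
  rw [Finset.sum_range_succ']
  simp only [Nat.cast_zero, zero_mul, mul_zero, add_zero, Nat.add_sub_cancel]
  unfold mpW
  rw [← Finset.sum_range_reflect, Finset.mul_sum]
  apply Finset.sum_congr rfl
  intro m hm
  simp only [Finset.mem_range] at hm
  unfold mpw
  rw [show D - (D + 1 - 1 - m) = m by omega, show D + 1 - 1 - m = D - m by omega,
      Nat.choose_symm (by omega), Nat.factorial_succ]
  have h3 : (((D + 1) * D.choose m : ℕ) : ℝ) = ((D + 1).choose (m + 1) * (m + 1) : ℕ) := by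
    rw [Nat.add_one_mul_choose_eq]
  push_cast at *
  set p : ℝ := (D.choose m : ℝ)
  set q : ℝ := ((D + 1).choose (m + 1) : ℝ)
  linear_combination (m.factorial * x ^ m * ((D + 1) * p + q * (m + 1))) * h3

theorem mpK_pos (d : ℕ) (x : ℝ) (hx : 0 ≤ x) : 0 < mpK d x := by
  unfold mpK
  rw [Finset.sum_range_succ']
  have : 0 ≤ ∑ k ∈ Finset.range d, (((d.choose (k + 1)) ^ 2 * (k + 1).factorial : ℝ) * x ^ (k + 1)) :=
    Finset.sum_nonneg fun k _ => by positivity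
  simp
  positivity

theorem mpK_zero (d : ℕ) : mpK d 0 = 1 := by
  unfold mpK
  rw [Finset.sum_range_succ']
  simp

section MPComb
variable {V : Type*} [Fintype V] [DecidableEq V]

/-- Matchings avoiding a set of vertices. -/
noncomputable def mpM (G : SimpleGraph V) (S : Finset V) : Finset (Finset (Sym2 V)) :=
  (matchingsFinset G).filter (fun M => ∀ e ∈ M, ∀ v ∈ S, v ∉ e)

/-- Neighbours of `u` outside `S` and not covered by `F`. -/
noncomputable def mpfr (G : SimpleGraph V) (F : Finset (Sym2 V)) (S : Finset V) (u : V) : Finset V :=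
  Finset.univ.filter (fun a => G.Adj u a ∧ a ∉ S ∧ ∀ e ∈ F, a ∉ e)

theorem mem_mpM (G : SimpleGraph V) (S : Finset V) (M : Finset (Sym2 V)) :
    M ∈ mpM G S ↔ (∀ e ∈ M, e ∈ G.edgeSet) ∧
      (∀ e ∈ M, ∀ f ∈ M, e ≠ f → ∀ v : V, v ∈ e → v ∉ f) ∧ ∀ e ∈ M, ∀ v ∈ S, v ∉ e := by
  simp [mpM, matchingsFinset, and_assoc]

theorem mem_mpfr (G : SimpleGraph V) (F : Finset (Sym2 V)) (S : Finset V) (u a : V) :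
    a ∈ mpfr G F S u ↔ G.Adj u a ∧ a ∉ S ∧ ∀ e ∈ F, a ∉ e := by
  simp [mpfr]

theorem mpM_empty (G : SimpleGraph V) : mpM G ∅ = matchingsFinset G := by
  simp [mpM]

theorem mp_notMem (G : SimpleGraph V) (S : Finset V) (u a : V) (F : Finset (Sym2 V))
    (hF : F ∈ mpM G (insert u S)) : s(u, a) ∉ F := by
  intro h
  rw [mem_mpM] at hF
  exact hF.2.2 _ h u (by simp) (by simp)

theorem mp_sum_rec (G : SimpleGraph V) (S : Finset V) (u : V) (hu : u ∉ S)
    (f : Finset (Sym2 V) → ℝ) :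
    ∑ H ∈ mpM G S, f H = ∑ F ∈ mpM G (insert u S),
      (f F + ∑ a ∈ mpfr G F S u, f (insert s(u, a) F)) := by
  rw [← Finset.sum_filter_add_sum_filter_not (mpM G S) (fun M => ∀ e ∈ M, u ∉ e),
    Finset.sum_add_distrib]
  congr 1
  · apply Finset.sum_congr _ (fun _ _ => rfl)
    ext M
    simp only [Finset.mem_filter, mem_mpM, Finset.mem_insert, forall_eq_or_imp]
    constructor
    · rintro ⟨⟨h1, h2, h3⟩, h4⟩
      exact ⟨h1, h2, fun e he => ⟨h4 e he, h3 e he⟩⟩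
    · rintro ⟨h1, h2, h3⟩
      exact ⟨⟨h1, h2, fun e he => (h3 e he).2⟩, fun e he => (h3 e he).1⟩
  · rw [Finset.sum_sigma']
    symm
    refine Finset.sum_bij (fun p _ => insert s(u, p.2) p.1) ?_ ?_ ?_ ?_
    · rintro ⟨F, a⟩ hp
      simp only [Finset.mem_sigma, mem_mpM, mem_mpfr] at hp
      obtain ⟨⟨h1, h2, h3⟩, h4, h5, h6⟩ := hp
      simp only [Finset.mem_filter, mem_mpM]
      refine ⟨⟨?_, ?_, ?_⟩, ?_⟩
      · intro e he
        rcases Finset.mem_insert.1 he with rfl | he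
        · exact h4
        · exact h1 e he
      · intro e he g hg hne v hv hvg
        rcases Finset.mem_insert.1 he with he' | he' <;> rcases Finset.mem_insert.1 hg with hg' | hg'
        · exact hne (he'.trans hg'.symm)
        · subst he'
          rcases Sym2.mem_iff.1 hv with rfl | rfl
          · exact h3 g hg' v (by simp) hvg
          · exact h6 g hg' hvg
        · subst hg'
          rcases Sym2.mem_iff.1 hvg with rfl | rfl
          · exact h3 e he' v (by simp) hv
          · exact h6 e he' hv
        · exact h2 e he' g hg' hne v hv hvg
      · intro e he v hv hve
        rcases Finset.mem_insert.1 he with he' | he'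
        · subst he'
          rcases Sym2.mem_iff.1 hve with rfl | rfl
          · exact hu hv
          · exact h5 hv
        · exact h3 e he' v (by simp [hv]) hve
      · intro h
        exact h s(u, a) (by simp) (by simp)
    · rintro ⟨F, a⟩ hp ⟨F', a'⟩ hp' heq
      simp only [Finset.mem_sigma] at hp hp'
      have n1 := fun b => mp_notMem G S u b F hp.1
      have n2 := fun b => mp_notMem G S u b F' hp'.1
      dsimp only at heq
      have ha : s(u, a) ∈ insert s(u, a') F' := by rw [← heq]; simp
      rcases Finset.mem_insert.1 ha with h | h
      · have : a = a' := by
          rcases (by simpa using h : a = a' ∨ u = a' ∧ a = u) with h | ⟨h1, h2⟩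
          · exact h
          · exact h2.trans h1
        subst this
        have : F = F' := by
          rw [← Finset.erase_insert (n1 a), heq, Finset.erase_insert (n2 a)]
        subst this
        rfl
      · exact absurd h (n2 a)
    · intro M hM
      simp only [Finset.mem_filter, mem_mpM] at hM
      obtain ⟨⟨h1, h2, h3⟩, h4⟩ := hM
      push Not at h4
      obtain ⟨e, he, hue⟩ := h4
      obtain ⟨a, rfl⟩ := Sym2.mem_iff_exists.1 hue
      refine ⟨⟨M.erase s(u, a), a⟩, ?_, ?_⟩
      · simp only [Finset.mem_sigma, mem_mpM, mem_mpfr]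
        refine ⟨⟨?_, ?_, ?_⟩, ?_, ?_, ?_⟩
        · intro e' he'
          exact h1 e' (Finset.mem_of_mem_erase he')
        · intro e' he' g hg
          exact h2 e' (Finset.mem_of_mem_erase he') g (Finset.mem_of_mem_erase hg)
        · intro e' he' v hv
          rcases Finset.mem_insert.1 hv with rfl | hv
          · exact h2 _ he _ (Finset.mem_of_mem_erase he') (Finset.ne_of_mem_erase he').symm v (by simp)
          · exact h3 e' (Finset.mem_of_mem_erase he') v hv
        · exact h1 _ he
        · intro ha
          exact h3 _ he a ha (by simp)
        · intro e' he'
          exact h2 _ he _ (Finset.mem_of_mem_erase he') (Finset.ne_of_mem_erase he').symm a (by simp)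
      · exact Finset.insert_erase he
    · intro p hp
      rfl

/-- The free neighbours of `u`, when `F` avoids `u` and its neighbour `v`. -/
theorem mpfr_avoid (G : SimpleGraph V) (u v : V) (huv : G.Adj u v) (F : Finset (Sym2 V))
    (hF : F ∈ mpM G {u, v}) : mpfr G F ∅ u = insert v (mpfr G F {v} u) := by
  rw [mem_mpM] at hF
  ext a
  simp only [mem_mpfr, Finset.mem_insert, Finset.mem_singleton, Finset.notMem_empty,
    not_false_eq_true, true_and]
  by_cases h : a = v
  · subst h
    simp only [true_or, iff_true]
    exact ⟨huv, fun e he => hF.2.2 e he a (by simp)⟩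
  · simp [h]

theorem mpfr_insert (G : SimpleGraph V) (u v b : V) (F : Finset (Sym2 V)) :
    mpfr G (insert s(v, b) F) ∅ u = (mpfr G F {v} u).erase b := by
  ext a
  simp only [mem_mpfr, Finset.mem_insert, Finset.mem_singleton, Finset.notMem_empty,
    not_false_eq_true, true_and, Finset.mem_erase, forall_eq_or_imp, Sym2.mem_iff]
  tauto

theorem mpfr_card_avoid (G : SimpleGraph V) (u v : V) (huv : G.Adj u v) (F : Finset (Sym2 V))
    (hF : F ∈ mpM G {u, v}) : (mpfr G F ∅ u).card = (mpfr G F {v} u).card + 1 := by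
  rw [mpfr_avoid G u v huv F hF, Finset.card_insert_of_notMem]
  simp [mem_mpfr]

theorem mpfr_card_le (G : SimpleGraph V) (d : ℕ) (hreg : G.IsRegularOfDegree d) (u : V)
    (F : Finset (Sym2 V)) : (mpfr G F ∅ u).card ≤ d := by
  rw [← hreg u, ← G.card_neighborFinset_eq_degree]
  apply Finset.card_le_card
  intro a ha
  rw [mem_mpfr] at ha
  simpa using ha.1

theorem mp_sum_J (I J : Finset V) (g : ℕ → ℝ) :
    ∑ b ∈ J, g ((I.erase b).card)
      = ((J.card : ℝ) - (I ∩ J).card) * g I.card + (I ∩ J).card * g (I.card - 1) := by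
  rw [← Finset.sum_filter_add_sum_filter_not J (fun b => b ∈ I)]
  have e1 : J.filter (fun b => b ∈ I) = I ∩ J := by ext; simp [and_comm]
  have e2 : (((J.filter (fun b => ¬ b ∈ I)).card : ℕ) : ℝ) = (J.card : ℝ) - (I ∩ J).card := by
    rw [← e1]
    have := Finset.card_filter_add_card_filter_not (s := J) (fun b => b ∈ I)
    rw [← this]; push_cast; ring
  have s1 : ∑ b ∈ J.filter (fun b => b ∈ I), g ((I.erase b).card)
      = ∑ b ∈ J.filter (fun b => b ∈ I), g (I.card - 1) := by
    apply Finset.sum_congr rfl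
    intro b hb
    rw [Finset.card_erase_of_mem (Finset.mem_filter.1 hb).2]
  have s2 : ∑ b ∈ J.filter (fun b => ¬ b ∈ I), g ((I.erase b).card)
      = ∑ b ∈ J.filter (fun b => ¬ b ∈ I), g (I.card) := by
    apply Finset.sum_congr rfl
    intro b hb
    rw [Finset.erase_eq_of_notMem (Finset.mem_filter.1 hb).2]
  rw [s1, s2, Finset.sum_const, Finset.sum_const, nsmul_eq_mul, nsmul_eq_mul, e2, e1]
  ring

theorem mp_pair_rec (G : SimpleGraph V) (u v : V) (huv : G.Adj u v) (f : Finset (Sym2 V) → ℝ) :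
    ∑ F ∈ mpM G {u}, f F = ∑ F ∈ mpM G {u, v},
      (f F + ∑ b ∈ mpfr G F {u} v, f (insert s(v, b) F)) := by
  rw [mp_sum_rec G {u} v (by simpa using huv.ne'), Finset.pair_comm u v]

theorem mp_card_insert (G : SimpleGraph V) (u v b : V) (F : Finset (Sym2 V))
    (hF : F ∈ mpM G {u, v}) : (insert s(v, b) F).card = F.card + 1 := by
  apply Finset.card_insert_of_notMem
  rw [Finset.pair_comm] at hF
  exact mp_notMem G {u} v b F hF

theorem mp_Z_u (G : SimpleGraph V) (x : ℝ) (u : V) :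
    matchingPoly G x = ∑ F ∈ mpM G {u}, x ^ F.card * (1 + x * (mpfr G F ∅ u).card) := by
  unfold matchingPoly
  rw [← mpM_empty, mp_sum_rec G ∅ u (by simp)]
  apply Finset.sum_congr rfl
  intro F hF
  have : ∀ a ∈ mpfr G F ∅ u, x ^ (insert s(u, a) F).card = x ^ F.card * x := by
    intro a _
    rw [Finset.card_insert_of_notMem (mp_notMem G ∅ u a F hF), pow_succ]
  rw [Finset.sum_congr rfl this, Finset.sum_const, nsmul_eq_mul]
  ring

theorem mp_Z_uv (G : SimpleGraph V) (x : ℝ) (u v : V) (huv : G.Adj u v) :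
    matchingPoly G x = ∑ F ∈ mpM G {u, v}, x ^ F.card *
      (1 + (((mpfr G F {v} u).card : ℝ) + (mpfr G F {u} v).card + 1) * x
        + (((mpfr G F {v} u).card : ℝ) * (mpfr G F {u} v).card
          - (mpfr G F {v} u ∩ mpfr G F {u} v).card) * x ^ 2) := by
  rw [mp_Z_u G x u, mp_pair_rec G u v huv]
  apply Finset.sum_congr rfl
  intro F hF
  rw [mpfr_card_avoid G u v huv F hF]
  simp only [mp_card_insert G u v _ F hF, mpfr_insert]
  rw [← Finset.mul_sum, mp_sum_J _ _ (fun t => 1 + x * (t : ℝ))]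
  set I := mpfr G F {v} u
  set J := mpfr G F {u} v
  have e : ((I ∩ J).card : ℝ) * (1 + x * ((I.card - 1 : ℕ) : ℝ))
      = ((I ∩ J).card : ℝ) * (1 + x * ((I.card : ℝ) - 1)) := by
    rcases Nat.eq_zero_or_pos I.card with h | h
    · have : I = ∅ := Finset.card_eq_zero.1 h
      simp [this]
    · rw [Nat.cast_sub h]; simp
  rw [e]
  push_cast
  ring

/-- The constraint function attached to an oriented edge. -/
noncomputable def mpc (G : SimpleGraph V) (D : ℕ) (x : ℝ) (u v : V) : ℝ :=
  ∑ F ∈ mpM G {u}, x ^ F.card * (mpL D x (mpfr G F ∅ u).card *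
    (if v ∈ mpfr G F ∅ u then ((D : ℝ) + 1 - (mpfr G F ∅ u).card) else -((mpfr G F ∅ u).card : ℝ)))

theorem mpc_sum (G : SimpleGraph V) (D : ℕ) (hreg : G.IsRegularOfDegree (D + 1)) (x : ℝ) (u : V) :
    ∑ v ∈ G.neighborFinset u, mpc G D x u v = 0 := by
  unfold mpc
  rw [Finset.sum_comm]
  apply Finset.sum_eq_zero
  intro F hF
  rw [← Finset.mul_sum, ← Finset.mul_sum]
  have e1 : (G.neighborFinset u).filter (fun v => v ∈ mpfr G F ∅ u) = mpfr G F ∅ u := by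
    ext a
    simp only [Finset.mem_filter, SimpleGraph.mem_neighborFinset, mem_mpfr]
    tauto
  have e2 : (((G.neighborFinset u).filter (fun v => ¬ v ∈ mpfr G F ∅ u)).card : ℝ)
      = (D : ℝ) + 1 - (mpfr G F ∅ u).card := by
    have := Finset.card_filter_add_card_filter_not (s := G.neighborFinset u)
      (fun v => v ∈ mpfr G F ∅ u)
    rw [e1, G.card_neighborFinset_eq_degree, hreg u] at this
    have h : (((mpfr G F ∅ u).card + ((G.neighborFinset u).filter
      (fun v => ¬ v ∈ mpfr G F ∅ u)).card : ℕ) : ℝ) = ((D + 1 : ℕ) : ℝ) := by rw [this]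
    push_cast at h
    linarith
  rw [Finset.sum_ite, Finset.sum_const, Finset.sum_const, nsmul_eq_mul, nsmul_eq_mul, e2, e1]
  ring

theorem mpc_eq (G : SimpleGraph V) (D : ℕ) (x : ℝ) (u v : V) (huv : G.Adj u v) :
    mpc G D x u v = ∑ F ∈ mpM G {u, v}, x ^ F.card *
      (((D : ℝ) - (mpfr G F {v} u).card) * mpL D x ((mpfr G F {v} u).card + 1)
        - x * ((((mpfr G F {u} v).card : ℝ) - (mpfr G F {v} u ∩ mpfr G F {u} v).card)
              * mph D x (mpfr G F {v} u).card
            + (mpfr G F {v} u ∩ mpfr G F {u} v).card * mph D x ((mpfr G F {v} u).card - 1))) := by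
  unfold mpc
  rw [mp_pair_rec G u v huv]
  apply Finset.sum_congr rfl
  intro F hF
  have hv : v ∈ mpfr G F ∅ u := by rw [mpfr_avoid G u v huv F hF]; simp
  rw [if_pos hv, mpfr_card_avoid G u v huv F hF]
  have hb : ∀ b ∈ mpfr G F {u} v,
      x ^ (insert s(v, b) F).card * (mpL D x (mpfr G (insert s(v, b) F) ∅ u).card *
        (if v ∈ mpfr G (insert s(v, b) F) ∅ u then
          ((D : ℝ) + 1 - (mpfr G (insert s(v, b) F) ∅ u).card)
          else -((mpfr G (insert s(v, b) F) ∅ u).card : ℝ)))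
      = -(x ^ F.card * x) * mph D x ((mpfr G F {v} u).erase b).card := by
    intro b _
    have hn : v ∉ mpfr G (insert s(v, b) F) ∅ u := by
      rw [mem_mpfr]
      intro h
      exact h.2.2 s(v, b) (by simp) (by simp)
    rw [if_neg hn, mp_card_insert G u v b F hF, mpfr_insert, ← mpL_mul]
    ring
  rw [Finset.sum_congr rfl hb, ← Finset.mul_sum, mp_sum_J]
  push_cast
  ring

/-- The weight of an edge. -/
noncomputable def mpS (G : SimpleGraph V) (x : ℝ) (u v : V) : ℝ :=
  ∑ F ∈ mpM G {u, v}, x ^ F.card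

theorem mp_edge_ineq (G : SimpleGraph V) (D : ℕ) (hreg : G.IsRegularOfDegree (D + 1)) (x : ℝ)
    (hx : 0 ≤ x) (u v : V) (huv : G.Adj u v) :
    mpK (D + 1) x * mpS G x u v + (1 / 2) * (mpc G D x u v + mpc G D x v u)
      ≤ mpW D x * matchingPoly G x := by
  rw [mpc_eq G D x u v huv, mpc_eq G D x v u huv.symm, mp_Z_uv G x u v huv, mpS,
    Finset.pair_comm v u, ← Finset.sum_add_distrib, Finset.mul_sum, Finset.mul_sum, Finset.mul_sum,
    ← Finset.sum_add_distrib]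
  apply Finset.sum_le_sum
  intro F hF
  have hi : (mpfr G F {v} u).card ≤ D := by
    have := mpfr_card_le G (D + 1) hreg u F
    rw [mpfr_card_avoid G u v huv F hF] at this
    omega
  have hj : (mpfr G F {u} v).card ≤ D := by
    have := mpfr_card_le G (D + 1) hreg v F
    rw [mpfr_card_avoid G v u huv.symm F (by rwa [Finset.pair_comm])] at this
    omega
  have hl := mp_local D x hx _ _ (mpfr G F {v} u ∩ mpfr G F {u} v).card hi hj
    (Finset.card_le_card Finset.inter_subset_left) (Finset.card_le_card Finset.inter_subset_right)
  rw [Finset.inter_comm (mpfr G F {u} v) (mpfr G F {v} u)]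
  have := mul_le_mul_of_nonneg_left hl (pow_nonneg hx F.card)
  linarith

theorem mp_total_ineq (G : SimpleGraph V) (D : ℕ) (hreg : G.IsRegularOfDegree (D + 1)) (x : ℝ)
    (hx : 0 ≤ x) :
    mpK (D + 1) x * ∑ u, ∑ v ∈ G.neighborFinset u, mpS G x u v
      ≤ mpW D x * matchingPoly G x * (Fintype.card V * (D + 1)) := by
  have h1 : ∑ u, ∑ v ∈ G.neighborFinset u,
      (mpK (D + 1) x * mpS G x u v + (1 / 2) * (mpc G D x u v + mpc G D x v u))
      ≤ ∑ u : V, ∑ v ∈ G.neighborFinset u, mpW D x * matchingPoly G x := by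
    apply Finset.sum_le_sum
    intro u _
    apply Finset.sum_le_sum
    intro v hv
    exact mp_edge_ineq G D hreg x hx u v (by simpa using hv)
  have h2 : ∑ u, ∑ v ∈ G.neighborFinset u, mpc G D x u v = 0 :=
    Finset.sum_eq_zero fun u _ => mpc_sum G D hreg x u
  have h3 : ∑ u, ∑ v ∈ G.neighborFinset u, mpc G D x v u = 0 := by
    rw [← h2]
    apply Finset.sum_comm'
    intro a b
    simp [G.adj_comm]
  simp only [Finset.sum_add_distrib, ← Finset.mul_sum] at h1
  rw [h2, h3] at h1
  simp only [Finset.sum_const, G.card_neighborFinset_eq_degree, nsmul_eq_mul] at h1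
  simp only [hreg.degree_eq] at h1
  simp only [Finset.sum_const, nsmul_eq_mul, Finset.card_univ] at h1
  push_cast at h1
  linarith

/-- The derivative of the matching polynomial. -/
noncomputable def mpM' (G : SimpleGraph V) (x : ℝ) : ℝ :=
  ∑ M ∈ matchingsFinset G, (M.card : ℝ) * x ^ (M.card - 1)

theorem mp_covered (G : SimpleGraph V) (H : Finset (Sym2 V)) (hH : H ∈ matchingsFinset G) :
    (Finset.univ.filter (fun u : V => ∃ e ∈ H, u ∈ e)).card = 2 * H.card := by
  rw [← mpM_empty, mem_mpM] at hH
  have e : Finset.univ.filter (fun u : V => ∃ e ∈ H, u ∈ e) = H.biUnion Sym2.toFinset := by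
    ext u; simp
  rw [e, Finset.card_biUnion]
  · rw [Finset.sum_congr rfl (fun e he => Sym2.card_toFinset_of_not_isDiag e
      (G.not_isDiag_of_mem_edgeSet (hH.1 e he)))]
    simp [mul_comm]
  · intro e he f hf hne
    change Disjoint _ _
    rw [Finset.disjoint_left]
    intro a ha hb
    exact hH.2.1 e he f hf hne a (by simpa using ha) (by simpa using hb)

theorem mp_vertex (G : SimpleGraph V) (x : ℝ) (u : V) :
    ∑ H ∈ matchingsFinset G, (if ∃ e ∈ H, u ∈ e then x ^ (H.card - 1) else 0)
      = ∑ v ∈ G.neighborFinset u, mpS G x u v := by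
  have h1 : ∑ H ∈ matchingsFinset G, (if ∃ e ∈ H, u ∈ e then x ^ (H.card - 1) else 0)
      = ∑ F ∈ mpM G {u}, ∑ v ∈ G.neighborFinset u,
          if v ∈ mpfr G F ∅ u then x ^ F.card else 0 := by
    rw [← mpM_empty, mp_sum_rec G ∅ u (by simp)]
    apply Finset.sum_congr rfl
    intro F hF
    have hn : ¬ ∃ e ∈ F, u ∈ e := by
      rintro ⟨e, he, hu⟩
      exact ((mem_mpM _ _ _).1 hF).2.2 e he u (by simp) hu
    rw [if_neg hn, zero_add, ← Finset.sum_filter (fun v => v ∈ mpfr G F ∅ u)]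
    have e1 : (G.neighborFinset u).filter (fun v => v ∈ mpfr G F ∅ u) = mpfr G F ∅ u := by
      ext a
      simp only [Finset.mem_filter, SimpleGraph.mem_neighborFinset, mem_mpfr]
      tauto
    rw [e1]
    apply Finset.sum_congr rfl
    intro a ha
    rw [if_pos ⟨s(u, a), by simp, by simp⟩,
      Finset.card_insert_of_notMem (mp_notMem G ∅ u a F hF), Nat.add_sub_cancel]
  rw [h1, Finset.sum_comm]
  apply Finset.sum_congr rfl
  intro v hv
  have huv : G.Adj u v := by simpa using hv
  rw [mp_pair_rec G u v huv, mpS]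
  apply Finset.sum_congr rfl
  intro F hF
  have hv : v ∈ mpfr G F ∅ u := by rw [mpfr_avoid G u v huv F hF]; simp
  rw [if_pos hv, Finset.sum_eq_zero, add_zero]
  intro b _
  rw [if_neg]
  rw [mem_mpfr]
  intro h
  exact h.2.2 s(v, b) (by simp) (by simp)

theorem mp_deriv_eq (G : SimpleGraph V) (x : ℝ) :
    2 * mpM' G x = ∑ u, ∑ v ∈ G.neighborFinset u, mpS G x u v := by
  rw [← Finset.sum_congr rfl (fun u _ => mp_vertex G x u), Finset.sum_comm, mpM', Finset.mul_sum]
  apply Finset.sum_congr rfl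
  intro H hH
  rw [← Finset.sum_filter, Finset.sum_const, mp_covered G H hH, nsmul_eq_mul]
  push_cast
  ring

theorem mp_hasDerivAt (G : SimpleGraph V) (x : ℝ) : HasDerivAt (matchingPoly G) (mpM' G x) x := by
  unfold matchingPoly mpM'
  apply HasDerivAt.fun_sum
  intro k hk
  exact hasDerivAt_pow _ x

theorem mp_empty_mem (G : SimpleGraph V) : (∅ : Finset (Sym2 V)) ∈ matchingsFinset G := by
  rw [← mpM_empty, mem_mpM]; simp

theorem mp_pos (G : SimpleGraph V) (x : ℝ) (hx : 0 ≤ x) : 0 < matchingPoly G x := by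
  unfold matchingPoly
  apply Finset.sum_pos' (fun M _ => pow_nonneg hx _)
  exact ⟨∅, mp_empty_mem G, by simp⟩

theorem mp_zero (G : SimpleGraph V) : matchingPoly G 0 = 1 := by
  unfold matchingPoly
  rw [Finset.sum_eq_single ∅]
  · simp
  · intro M _ hM
    exact zero_pow (by simpa using hM)
  · intro h
    exact absurd (mp_empty_mem G) h

theorem mp_log (G : SimpleGraph V) (D : ℕ) (hreg : G.IsRegularOfDegree (D + 1)) (x : ℝ)
    (hx : 0 ≤ x) :
    2 * ((D : ℝ) + 1) * Real.log (matchingPoly G x)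
      ≤ Fintype.card V * Real.log (mpK (D + 1) x) := by
  set ψ : ℝ → ℝ := fun t => 2 * ((D : ℝ) + 1) * Real.log (matchingPoly G t)
      - Fintype.card V * Real.log (mpK (D + 1) t) with hψ
  have hd : ∀ t : ℝ, 0 ≤ t → HasDerivAt ψ (2 * ((D : ℝ) + 1) * (mpM' G t / matchingPoly G t)
      - Fintype.card V * (((D : ℝ) + 1) ^ 2 * mpW D t / mpK (D + 1) t)) t := by
    intro t ht
    exact (((mp_hasDerivAt G t).log (mp_pos G t ht).ne').const_mul _).sub
      (((mpK_hasDerivAt D t).log (mpK_pos _ t ht).ne').const_mul _)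
  have hanti : AntitoneOn ψ (Set.Ici 0) := by
    apply antitoneOn_of_deriv_nonpos (convex_Ici 0)
    · intro t ht
      exact (hd t ht).continuousAt.continuousWithinAt
    · intro t ht
      rw [interior_Ici] at ht
      exact (hd t (le_of_lt ht)).differentiableAt.differentiableWithinAt
    · intro t ht
      rw [interior_Ici] at ht
      have ht : 0 ≤ t := le_of_lt ht
      rw [(hd t ht).deriv, sub_nonpos]
      have p1 := mp_pos G t ht
      have p2 := mpK_pos (D + 1) t ht
      have key := mp_total_ineq G D hreg t ht
      rw [← mp_deriv_eq] at key
      rw [mul_div_assoc', mul_div_assoc', div_le_div_iff₀ p1 p2]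
      have := mul_le_mul_of_nonneg_left key (by positivity : (0 : ℝ) ≤ D + 1)
      linarith
  have := hanti (Set.mem_Ici.2 le_rfl) (Set.mem_Ici.2 hx) hx
  simp only [hψ, mp_zero, mpK_zero, Real.log_one, mul_zero, sub_zero] at this
  linarith

end MPComb

/-- For every $d$-regular graph $G$ and $\lambda > 0$, the normalized (per edge)
log matching polynomial of $G$ is at most that of $K_{d,d}$, which has $d^2$ edges
and matching polynomial $\sum_{k=0}^d \binom dk^2 k! \lambda^k$. -/
theorem normalized_log_matchingPoly_le {V : Type*} [Fintype V] [DecidableEq V]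
    (G : SimpleGraph V) (d : ℕ) (hd : 1 ≤ d) (hreg : G.IsRegularOfDegree d)
    (x : ℝ) (hx : 0 < x) :
    (1 / (G.edgeFinset.card : ℝ)) * Real.log (matchingPoly G x)
      ≤ (1 / (d ^ 2 : ℝ)) *
        Real.log (∑ k ∈ Finset.range (d + 1),
          ((d.choose k) ^ 2 * k.factorial : ℝ) * x ^ k) := by
  obtain ⟨D, rfl⟩ : ∃ D, d = D + 1 := ⟨d - 1, by omega⟩
  have h := mp_log G D hreg x hx.le
  have hE := G.sum_degrees_eq_twice_card_edges
  simp only [hreg.degree_eq, Finset.sum_const, smul_eq_mul, Finset.card_univ] at hE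
  have hE' : (Fintype.card V : ℝ) * (D + 1) = 2 * (G.edgeFinset.card : ℝ) := by exact_mod_cast hE
  have hK : 0 ≤ Real.log (mpK (D + 1) x) := by
    apply Real.log_nonneg
    unfold mpK
    rw [Finset.sum_range_succ']
    have : 0 ≤ ∑ k ∈ Finset.range (D + 1),
        ((((D + 1).choose (k + 1)) ^ 2 * (k + 1).factorial : ℝ) * x ^ (k + 1)) :=
      Finset.sum_nonneg fun k _ => by positivity
    simpa using this
  change _ ≤ _ * Real.log (mpK (D + 1) x)
  rcases Nat.eq_zero_or_pos G.edgeFinset.card with h0 | h0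
  · rw [h0]
    simp only [Nat.cast_zero, div_zero, zero_mul]
    positivity
  · have h0' : (0 : ℝ) < G.edgeFinset.card := by exact_mod_cast h0
    rw [one_div_mul_eq_div, one_div_mul_eq_div, div_le_div_iff₀ h0' (by positivity)]
    push_cast
    have := mul_le_mul_of_nonneg_left h (by positivity : (0 : ℝ) ≤ D + 1)
    have e : ((D : ℝ) + 1) * (Fintype.card V * Real.log (mpK (D + 1) x))
        = 2 * (G.edgeFinset.card : ℝ) * Real.log (mpK (D + 1) x) := by rw [← hE']; ring
    rw [e] at this
    linarith
end

section
/- The total number of matchings of any d-regular graph G on n vertices (with 2d | n) is at most (Σ_{k=0}^{d} (d choose k)² k!)^{n/(2d)}, the number of matchings of a disjoint union of n/(2d) copies of K_{d,d}. -/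
open Finset
open scoped Classical

/-- Matching polynomial of `K_{m,m}`. -/
noncomputable def kPoly (m : ℕ) (t : ℝ) : ℝ :=
  ∑ k ∈ Finset.range (m + 1), ((m.choose k : ℝ) ^ 2 * (k.factorial : ℝ)) * t ^ k

/-- Weight of the matchings of `K_{m,m}` leaving `s` vertices uncovered on a side. -/
noncomputable def kW (m : ℕ) (t : ℝ) (s : ℕ) : ℝ :=
  ((m.choose s : ℝ) ^ 2 * ((m - s).factorial : ℝ)) * t ^ (m - s)

lemma kPoly_pos (m : ℕ) {t : ℝ} (ht : 0 ≤ t) : 0 < kPoly m t := by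
  unfold kPoly
  rw [Finset.sum_range_succ']
  have : 0 ≤ ∑ k ∈ Finset.range m,
      ((m.choose (k+1) : ℝ) ^ 2 * ((k+1).factorial : ℝ)) * t ^ (k+1) :=
    Finset.sum_nonneg fun i _ => by positivity
  simp
  linarith

lemma kW_pos {m s : ℕ} (h : s ≤ m) {t : ℝ} (ht : 0 < t) : 0 < kW m t s := by
  unfold kW
  have := Nat.choose_pos h
  positivity

lemma kW_rec {m i : ℕ} (h : i < m) (t : ℝ) :
    t * ((i : ℝ) + 1) ^ 2 * kW m t (i + 1) = ((m : ℝ) - i) * kW m t i := by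
  unfold kW
  obtain ⟨j, rfl⟩ : ∃ j, m = i + 1 + j := ⟨m - (i + 1), by omega⟩
  have h1 : i + 1 + j - (i + 1) = j := by omega
  have h2 : i + 1 + j - i = j + 1 := by omega
  have h3 := Nat.choose_succ_right_eq (i + 1 + j) i
  rw [h2] at h3
  have h3' : ((i + 1 + j).choose (i + 1) : ℝ) * (i + 1) = ((i + 1 + j).choose i : ℝ) * (j + 1) := by
    exact_mod_cast h3
  rw [h1, h2, Nat.factorial_succ, pow_succ t j]
  push_cast
  have : t * ((i : ℝ) + 1) ^ 2 * (((i + 1 + j).choose (i + 1) : ℝ) ^ 2 * (j.factorial : ℝ) * t ^ j)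
     = t * (((i + 1 + j).choose (i + 1) : ℝ) * (i + 1)) ^ 2 * (j.factorial : ℝ) * t ^ j := by ring
  rw [this, h3']
  ring

lemma kPoly_succ (m : ℕ) (t : ℝ) :
    kPoly (m + 1) t = ∑ k ∈ Finset.range (m + 1),
      (((m.choose k : ℝ) ^ 2 * (k.factorial : ℝ)) * t ^ k) * (1 + t * (2 * m + 1) - t * k) := by
  have key : ∀ k : ℕ, (((m + 1).choose (k + 1) : ℝ) ^ 2 * ((k + 1).factorial : ℝ)) * t ^ (k + 1)
      = ((m.choose (k + 1) : ℝ) ^ 2 * ((k + 1).factorial : ℝ)) * t ^ (k + 1)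
        + ((m.choose k : ℝ) ^ 2 * (k.factorial : ℝ)) * t ^ k * (t * (2 * m + 1) - t * k) := by
    intro k
    rcases le_or_gt k m with hk | hk
    · have h3 := Nat.choose_succ_right_eq m k
      have h3' : (m.choose (k + 1) : ℝ) * (k + 1) = (m.choose k : ℝ) * ((m : ℝ) - k) := by
        rw [← Nat.cast_sub hk]; exact_mod_cast h3
      rw [Nat.choose_succ_succ, Nat.factorial_succ, pow_succ]
      push_cast
      linear_combination (2 * (m.choose k : ℝ) * (k.factorial : ℝ) * t ^ k * t) * h3'
    · rw [Nat.choose_eq_zero_of_lt hk, Nat.choose_eq_zero_of_lt (by omega : m + 1 < k + 1),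
        Nat.choose_eq_zero_of_lt (by omega : m < k + 1)]
      simp
  unfold kPoly
  rw [Finset.sum_range_succ']
  rw [Finset.sum_congr rfl (fun k _ => key k), Finset.sum_add_distrib]
  have e1 : ∑ k ∈ Finset.range (m + 1), ((m.choose k : ℝ) ^ 2 * (k.factorial : ℝ)) * t ^ k
      = ∑ k ∈ Finset.range (m + 1),
        ((m.choose (k + 1) : ℝ) ^ 2 * ((k + 1).factorial : ℝ)) * t ^ (k + 1) + 1 := by
    rw [Finset.sum_range_succ', Finset.sum_range_succ _ m]
    simp
  have e2 : ∀ k : ℕ, (((m.choose k : ℝ) ^ 2 * (k.factorial : ℝ)) * t ^ k) *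
      (1 + t * (2 * m + 1) - t * k) = ((m.choose k : ℝ) ^ 2 * (k.factorial : ℝ)) * t ^ k +
      ((m.choose k : ℝ) ^ 2 * (k.factorial : ℝ)) * t ^ k * (t * (2 * m + 1) - t * k) := by
    intro k; ring
  rw [Finset.sum_congr rfl (fun k _ => e2 k), Finset.sum_add_distrib, e1]
  simp
  ring

lemma sum_kW (m : ℕ) (t : ℝ) : ∑ s ∈ Finset.range (m + 1), kW m t s = kPoly m t := by
  unfold kPoly
  rw [← Finset.sum_range_reflect]
  refine Finset.sum_congr rfl fun k hk => ?_
  have hk' : k ≤ m := by simpa [Nat.lt_succ_iff] using hk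
  unfold kW
  rw [show m + 1 - 1 - k = m - k by omega, show m - (m - k) = k by omega, Nat.choose_symm hk']

lemma sum_kW' (m : ℕ) (t : ℝ) :
    ∑ s ∈ Finset.range (m + 1), kW m t s * (1 + t * (m + 1) + t * s) = kPoly (m + 1) t := by
  rw [kPoly_succ, ← Finset.sum_range_reflect]
  refine Finset.sum_congr rfl fun k hk => ?_
  have hk' : k ≤ m := by simpa [Nat.lt_succ_iff] using hk
  unfold kW
  rw [show m + 1 - 1 - k = m - k by omega, show m - (m - k) = k by omega, Nat.choose_symm hk',
    Nat.cast_sub hk']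
  ring

/-- The (negated, shifted) dual variables. -/
noncomputable def gSeq (m : ℕ) (t κ : ℝ) : ℕ → ℝ
  | 0 => 0
  | (i + 1) => ((i : ℝ) + 1) / ((m : ℝ) - i) * (κ - t * i + t * i * gSeq m t κ i)

lemma gSeq_sum (m : ℕ) (t κ : ℝ) : ∀ i ≤ m,
    ∑ s ∈ Finset.range i, kW m t s * (κ - t * s) = t * i * kW m t i * gSeq m t κ i := by
  intro i
  induction i with
  | zero => simp
  | succ i ih =>
    intro hi
    rw [Finset.sum_range_succ, ih (by omega), gSeq]
    have h := kW_rec (show i < m by omega) t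
    have hne : (m : ℝ) - i ≠ 0 := by
      have : (i : ℝ) < m := by exact_mod_cast (show i < m by omega)
      linarith
    push_cast
    have : t * ((i : ℝ) + 1) * kW m t (i + 1) *
        (((i : ℝ) + 1) / ((m : ℝ) - i) * (κ - t * i + t * i * gSeq m t κ i))
        = (t * ((i : ℝ) + 1) ^ 2 * kW m t (i + 1)) / ((m : ℝ) - i)
          * (κ - t * i + t * i * gSeq m t κ i) := by ring
    rw [this, h]
    field_simp
    ring

lemma gSeq_eq (m : ℕ) {t : ℝ} (ht : 0 < t) (i : ℕ) (hi : i ≤ m) :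
    ((m : ℝ) - i) / (i + 1) * gSeq m t (kPoly (m + 1) t / kPoly m t - 1 - t * (m + 1)) (i + 1)
      - t * i * gSeq m t (kPoly (m + 1) t / kPoly m t - 1 - t * (m + 1)) i
      = kPoly (m + 1) t / kPoly m t - 1 - t * (m + 1) - t * i := by
  set κ := kPoly (m + 1) t / kPoly m t - 1 - t * (m + 1) with hκ
  rcases hi.lt_or_eq with h | rfl
  · have hne : (m : ℝ) - i ≠ 0 := by
      have : (i : ℝ) < m := by exact_mod_cast h
      linarith
    rw [gSeq]
    field_simp
    ring
  · have h1 := gSeq_sum i t κ i le_rfl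
    have h2 : ∑ s ∈ Finset.range (i + 1), kW i t s * (κ - t * s) = 0 := by
      have : ∀ s : ℕ, kW i t s * (κ - t * s) = kW i t s * (κ + 1 + t * (i + 1))
          - kW i t s * (1 + t * (i + 1) + t * s) := by intro s; ring
      rw [Finset.sum_congr rfl (fun s _ => this s), Finset.sum_sub_distrib, sum_kW',
        ← Finset.sum_mul, sum_kW, hκ]
      have := (kPoly_pos i ht.le).ne'
      field_simp
      ring
    rw [Finset.sum_range_succ, h1] at h2
    have hw := (kW_pos (le_refl i) ht).ne'
    have : kW i t i * (t * i * gSeq i t κ i + (κ - t * i)) = 0 := by linarith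
    rcases mul_eq_zero.1 this with h | h
    · exact absurd h hw
    · rw [sub_self, zero_div, zero_mul]; linarith

lemma g_nonneg {m : ℕ} {t κ : ℝ} (ht : 0 < t) {g : ℕ → ℝ} 
    (h : ∀ i ≤ m, ((m : ℝ) - i) / (i + 1) * g (i + 1) - t * i * g i = κ - t * i)
    (i : ℕ) (hi1 : 1 ≤ i) (him : i ≤ m) : 0 ≤ g i := by
  obtain ⟨j, hj, hmin⟩ := Finset.exists_min_image (Finset.Icc 1 m) g ⟨i, by simp [hi1, him]⟩
  refine le_trans ?_ (hmin i (by simp [hi1, him]))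
  by_contra hneg
  push Not at hneg
  rw [Finset.mem_Icc] at hj
  obtain ⟨l, rfl⟩ : ∃ l, j = l + 1 := ⟨j - 1, by omega⟩
  have e1 := h (l + 1) hj.2
  have e0 := h l (by omega)
  have hlm : (l : ℝ) + 1 ≤ m := by exact_mod_cast hj.2
  have hl0 : (0 : ℝ) ≤ l := by positivity
  push_cast at e1
  have a1 : ((m : ℝ) - (l + 1)) / (l + 1 + 1) * g (l + 1)
      ≤ ((m : ℝ) - (l + 1)) / (l + 1 + 1) * g (l + 1 + 1) := by
    rcases hj.2.lt_or_eq with h' | h'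
    · apply mul_le_mul_of_nonneg_left (hmin _ (by simp; omega))
      exact div_nonneg (by linarith) (by linarith)
    · rw [← h']; push_cast; simp
  have a2 : t * l * g (l + 1) ≤ t * l * g l := by
    rcases Nat.eq_zero_or_pos l with h' | h'
    · simp [h']
    · exact mul_le_mul_of_nonneg_left (hmin _ (by simp; omega)) (by positivity)
  have a3 : ((m : ℝ) - (l + 1)) / (l + 1 + 1) ≤ ((m : ℝ) - l) / (l + 1) := by
    gcongr <;> linarith
  have a4 := mul_le_mul_of_nonpos_right a3 hneg.le
  have a5 : t * g (l + 1) < 0 := mul_neg_of_pos_of_neg ht hneg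
  linarith

lemma g_mono {m : ℕ} {t κ : ℝ} (ht : 0 < t) {g : ℕ → ℝ} (h0 : g 0 = 0)
    (h : ∀ i ≤ m, ((m : ℝ) - i) / (i + 1) * g (i + 1) - t * i * g i = κ - t * i)
    (i : ℕ) (him : i < m) : g i ≤ g (i + 1) := by
  rcases Nat.eq_zero_or_pos i with rfl | hi
  · rw [h0]; exact g_nonneg ht h 1 le_rfl (by omega)
  rw [← sub_nonneg]
  obtain ⟨j, hj, hmin⟩ := Finset.exists_min_image (Finset.Ico 1 m) (fun i => g (i + 1) - g i)
    ⟨i, by simp [him]; omega⟩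
  refine le_trans ?_ (hmin i (by simp [him]; omega))
  by_contra hneg
  push Not at hneg
  rw [Finset.mem_Ico] at hj
  obtain ⟨l, rfl⟩ : ∃ l, j = l + 1 := ⟨j - 1, by omega⟩
  have hlm : (l : ℝ) + 2 ≤ m := by exact_mod_cast hj.2
  have hl0 : (0 : ℝ) ≤ l := by positivity
  have e0 := h l (by omega)
  have e1 := h (l + 1) (by omega)
  have e2 := h (l + 2) (by omega)
  have hg := g_nonneg ht h (l + 1) (by omega) (by omega)
  push_cast at e1 e2
  rw [show l + 2 + 1 = l + 1 + 1 + 1 by rfl, show l + 2 = l + 1 + 1 by rfl] at e2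
  have a1 : ((m : ℝ) - (l + 2)) / (l + 2 + 1) * (g (l + 1 + 1) - g (l + 1))
      ≤ ((m : ℝ) - (l + 2)) / (l + 2 + 1) * (g (l + 1 + 1 + 1) - g (l + 1 + 1)) := by
    rcases (show l + 2 ≤ m by omega).lt_or_eq with h' | h'
    · apply mul_le_mul_of_nonneg_left (hmin (l + 1 + 1) (by simp; omega))
      exact div_nonneg (by linarith) (by linarith)
    · rw [← h']; push_cast; simp
  have a2 : t * l * (g (l + 1 + 1) - g (l + 1)) ≤ t * l * (g (l + 1) - g l) := by
    rcases Nat.eq_zero_or_pos l with h' | h'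
    · simp [h']
    · exact mul_le_mul_of_nonneg_left (hmin l (by simp; omega)) (by positivity)
  set D := g (l + 1 + 1) - g (l + 1) with hD
  set A := g (l + 1) with hA
  have hg2 : g (l + 1 + 1) = A + D := by rw [hD]; ring
  set E := g (l + 1 + 1 + 1) - g (l + 1 + 1) with hE
  have hg3 : g (l + 1 + 1 + 1) = A + D + E := by rw [hE, hg2]; ring
  set F := g (l + 1) - g l with hF
  have hg0 : g l = A - F := by rw [hF]; ring
  rw [hg3, hg2] at e2
  rw [hg2] at e1
  rw [hg0] at e0
  set b0 := ((m : ℝ) - l) / (l + 1) with hb0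
  set b1 := ((m : ℝ) - (l + 1)) / (l + 1 + 1) with hb1
  set b2 := ((m : ℝ) - (l + 2)) / (l + 2 + 1) with hb2
  have hconv : b2 - 2 * b1 + b0 = 2 * ((m : ℝ) + 1) / ((l + 1) * (l + 2) * (l + 3)) := by
    rw [hb0, hb1, hb2]
    field_simp
    ring
  have hc0 : 0 ≤ b2 - 2 * b1 + b0 := by rw [hconv]; positivity
  have hb21 : b2 ≤ b1 := by
    rw [hb1, hb2]
    gcongr <;> linarith
  have key : b2 * E + t * l * F + D * (b2 - 2 * b1 - t * (l + 2)) + A * (b2 - 2 * b1 + b0) = 0 := by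
    linear_combination e2 - 2 * e1 + e0
  have h1 := mul_nonneg hg hc0
  have h2 := mul_le_mul_of_nonpos_right hb21 hneg.le
  have h3 : t * D < 0 := mul_neg_of_pos_of_neg ht hneg
  linarith

/-- Feasible dual solution. -/
lemma dual_exists (m : ℕ) {t : ℝ} (ht : 0 < t) : ∃ g : ℕ → ℝ, g 0 = 0 ∧
    (∀ i < m, g i ≤ g (i + 1)) ∧ ∀ i ≤ m, ((m : ℝ) - i) / (i + 1) * g (i + 1) - t * i * g i
      = kPoly (m + 1) t / kPoly m t - 1 - t * (m + 1) - t * i :=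
  ⟨gSeq m t (kPoly (m + 1) t / kPoly m t - 1 - t * (m + 1)), rfl,
    g_mono ht rfl (fun i hi => gSeq_eq m ht i hi), fun i hi => gSeq_eq m ht i hi⟩

/-- Pointwise dual inequality. With `y i = - g i - t * i`. -/
lemma dual_ineq (m : ℕ) {t c : ℝ} (ht : 0 < t) (g : ℕ → ℝ)
    (hmono : ∀ i < m, g i ≤ g (i + 1))
    (heq : ∀ i ≤ m, ((m : ℝ) - i) / (i + 1) * g (i + 1) - t * i * g i
      = c - 1 - t * (m + 1) - t * i) (a b k : ℕ) (ha : a ≤ m) (hb : b ≤ m) (hka : k ≤ a)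
    (hkb : k ≤ b) :
    c + 1 / 2 * (
      (((m : ℝ) - a) * ((- g (a + 1) - t * (a + 1)) / (a + 1))
        - t * (((b : ℝ) - k) * (- g a - t * a) + k * (- g (a - 1) - t * ((a - 1 : ℕ) : ℝ))))
      + (((m : ℝ) - b) * ((- g (b + 1) - t * (b + 1)) / (b + 1))
        - t * (((a : ℝ) - k) * (- g b - t * b) + k * (- g (b - 1) - t * ((b - 1 : ℕ) : ℝ)))))
    ≤ 1 + t * (1 + a + b) + t ^ 2 * (a * b - k) := by
  have hmono' : ∀ i j, i ≤ j → j ≤ m → g i ≤ g j := by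
    intro i j hij
    induction j, hij using Nat.le_induction with
    | base => intro _; exact le_rfl
    | succ j _ ih => intro hj; exact (ih (by omega)).trans (hmono j (by omega))
  have hA : ((m : ℝ) - a) * ((- g (a + 1) - t * (a + 1)) / (a + 1))
      = - (c - 1 - t * (m + 1) - t * a + t * a * g a) - t * (m - a) := by
    rw [← heq a ha]; field_simp; ring
  have hB : ((m : ℝ) - b) * ((- g (b + 1) - t * (b + 1)) / (b + 1))
      = - (c - 1 - t * (m + 1) - t * b + t * b * g b) - t * (m - b) := by
    rw [← heq b hb]; field_simp; ring
  rw [hA, hB]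
  have hkk : ∀ a : ℕ, a ≤ m → k ≤ a →
     (k : ℝ) * (- g a - t * a) + t * k ≤ k * (- g (a - 1) - t * ((a - 1 : ℕ) : ℝ)) := by
    intro a ha hka
    rcases Nat.eq_zero_or_pos k with h | h
    · simp [h]
    · have h1 := hmono' (a - 1) a (by omega) ha
      rw [Nat.cast_sub (by omega)]
      have := mul_le_mul_of_nonneg_left h1 (Nat.cast_nonneg k : (0:ℝ) ≤ k)
      push_cast
      linarith
  have k1 := mul_le_mul_of_nonneg_left (hkk a ha hka) ht.le
  have k2 := mul_le_mul_of_nonneg_left (hkk b hb hkb) ht.le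
  have hab : 0 ≤ ((a : ℝ) - b) * (g a - g b) := by
    rcases le_total a b with h | h
    · have h1 := hmono' a b h hb
      have h2 : (a : ℝ) ≤ b := by exact_mod_cast h
      nlinarith
    · have h1 := hmono' b a h ha
      have h2 : (b : ℝ) ≤ a := by exact_mod_cast h
      nlinarith
  have k3 := mul_nonneg ht.le hab
  linarith

section Comb

variable {V : Type*} [Fintype V] [DecidableEq V] (G : SimpleGraph V)

lemma mem_mF (M : Finset (Sym2 V)) : M ∈ matchingsFinset G ↔
    (∀ e ∈ M, e ∈ G.edgeSet) ∧ ∀ e ∈ M, ∀ f ∈ M, e ≠ f → ∀ v : V, v ∈ e → v ∉ f := by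
  simp [matchingsFinset]

/-- Uncovered vertices. -/
noncomputable def unc (M : Finset (Sym2 V)) : Finset V :=
  Finset.univ.filter (fun v => ∀ e ∈ M, v ∉ e)

/-- Uncovered neighbours. -/
noncomputable def nbr (M : Finset (Sym2 V)) (u : V) : Finset V :=
  (unc M).filter (fun v => G.Adj u v)

lemma mem_unc (M : Finset (Sym2 V)) (v : V) : v ∈ unc M ↔ ∀ e ∈ M, v ∉ e := by
  simp [unc]

lemma mem_nbr (M : Finset (Sym2 V)) (u v : V) : v ∈ nbr G M u ↔ v ∈ unc M ∧ G.Adj u v := by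
  simp [nbr]

lemma notMem_of_unc {M : Finset (Sym2 V)} {x y : V} (hx : x ∈ unc M) : s(x, y) ∉ M := by
  intro h
  exact (mem_unc M x).1 hx _ h (by simp)

lemma unc_insert (M : Finset (Sym2 V)) (x y u : V) :
    u ∈ unc (insert s(x, y) M) ↔ u ∈ unc M ∧ u ≠ x ∧ u ≠ y := by
  simp only [mem_unc, Finset.mem_insert, forall_eq_or_imp, Sym2.mem_iff, not_or]
  tauto

lemma bij (F : Finset (Sym2 V) → V → V → ℝ) :
    ∑ M ∈ matchingsFinset G, ∑ x : V, ∑ y : V, (if s(x, y) ∈ M then F M x y else 0)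
    = ∑ M ∈ matchingsFinset G, ∑ x : V, ∑ y : V,
      (if G.Adj x y ∧ x ∈ unc M ∧ y ∈ unc M then F (insert s(x, y) M) x y else 0) := by
  rw [Finset.sum_comm]
  conv_rhs => rw [Finset.sum_comm]
  refine Finset.sum_congr rfl fun x _ => ?_
  rw [Finset.sum_comm]
  conv_rhs => rw [Finset.sum_comm]
  refine Finset.sum_congr rfl fun y _ => ?_
  rw [← Finset.sum_filter, ← Finset.sum_filter]
  refine Finset.sum_bij' (fun M _ => M.erase s(x, y)) (fun M _ => insert s(x, y) M) ?_ ?_ ?_ ?_ ?_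
  · intro M hM
    rw [Finset.mem_filter, mem_mF] at hM
    obtain ⟨⟨h1, h2⟩, h3⟩ := hM
    rw [Finset.mem_filter, mem_mF]
    refine ⟨⟨fun e he => h1 e (Finset.mem_of_mem_erase he), fun e he f hf =>
      h2 e (Finset.mem_of_mem_erase he) f (Finset.mem_of_mem_erase hf)⟩, ?_, ?_, ?_⟩
    · exact h1 _ h3
    · rw [mem_unc]
      intro e he
      exact h2 _ h3 e (Finset.mem_of_mem_erase he) (Finset.ne_of_mem_erase he).symm x (by simp)
    · rw [mem_unc]
      intro e he
      exact h2 _ h3 e (Finset.mem_of_mem_erase he) (Finset.ne_of_mem_erase he).symm y (by simp)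
  · intro M hM
    rw [Finset.mem_filter, mem_mF] at hM
    obtain ⟨⟨h1, h2⟩, h3, h4, h5⟩ := hM
    rw [mem_unc] at h4 h5
    rw [Finset.mem_filter, mem_mF]
    refine ⟨⟨?_, ?_⟩, by simp⟩
    · intro e he
      rcases Finset.mem_insert.1 he with rfl | he
      · exact h3
      · exact h1 e he
    · intro e he f hf hne v hve hvf
      rcases Finset.mem_insert.1 he with rfl | he' <;> rcases Finset.mem_insert.1 hf with rfl | hf'
      · exact hne rfl
      · rcases Sym2.mem_iff.1 hve with rfl | rfl
        · exact h4 f hf' hvf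
        · exact h5 f hf' hvf
      · rcases Sym2.mem_iff.1 hvf with rfl | rfl
        · exact h4 e he' hve
        · exact h5 e he' hve
      · exact h2 e he' f hf' hne v hve hvf
  · intro M hM
    exact Finset.insert_erase (Finset.mem_filter.1 hM).2
  · intro M hM
    exact Finset.erase_insert (notMem_of_unc (Finset.mem_filter.1 hM).2.2.1)
  · intro M hM
    rw [Finset.insert_erase (Finset.mem_filter.1 hM).2]

lemma cov {M : Finset (Sym2 V)} (hM : M ∈ matchingsFinset G) (x : V) (c : ℝ) :
    ∑ y : V, (if s(x, y) ∈ M then c else 0) = if x ∈ unc M then 0 else c := by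
  rw [mem_mF] at hM
  split_ifs with h
  · exact Finset.sum_eq_zero fun y _ => if_neg (notMem_of_unc h)
  · rw [mem_unc] at h
    push Not at h
    obtain ⟨e, he, hxe⟩ := h
    obtain ⟨z, rfl⟩ := Sym2.mem_iff_exists.1 hxe
    rw [Finset.sum_eq_single z, if_pos he]
    · intro y _ hy
      refine if_neg fun h => ?_
      refine hM.2 _ he _ h ?_ x (by simp) (by simp)
      intro h'
      exact hy (Sym2.congr_right.1 h').symm
    · simp

lemma two_card {M : Finset (Sym2 V)} (hM : M ∈ matchingsFinset G) (c : ℝ) :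
    ∑ x : V, ∑ y : V, (if s(x, y) ∈ M then c else 0) = 2 * (M.card : ℝ) * c := by
  rw [mem_mF] at hM
  have h1 : ∀ x y : V, (if s(x, y) ∈ M then c else 0) = ∑ e ∈ M, if s(x, y) = e then c else 0 := by
    intro x y
    rw [Finset.sum_ite_eq]
  simp_rw [h1]
  have : ∀ e ∈ M, ∑ x : V, ∑ y : V, (if s(x, y) = e then c else 0) = 2 * c := by
    intro e he
    have hd := hM.1 e he
    induction e using Sym2.ind with
    | _ a b =>
    have hab : a ≠ b := G.ne_of_adj hd
    have : ∀ x y : V, (if s(x, y) = s(a, b) then c else 0)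
        = (if x = a then (if y = b then c else 0) else 0)
          + (if x = b then (if y = a then c else 0) else 0) := by
      intro x y
      simp only [Sym2.eq_iff]
      by_cases h1 : x = a
      · subst h1; simp [hab]
      · by_cases h2 : x = b
        · subst h2; simp [h1]
        · simp [h1, h2]
    simp_rw [this, Finset.sum_add_distrib]
    simp
    ring
  rw [Finset.sum_congr rfl fun x _ => Finset.sum_comm, Finset.sum_comm,
    Finset.sum_congr rfl this, Finset.sum_const]
  simp
  ring

/-- Sum over darts of uncovered graph. -/
noncomputable def dS (M : Finset (Sym2 V)) (f : V → V → ℝ) : ℝ :=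
  ∑ u ∈ unc M, ∑ v ∈ nbr G M u, f u v

lemma dS_eq (M : Finset (Sym2 V)) (f : V → V → ℝ) :
    dS G M f = ∑ x : V, ∑ y : V, if G.Adj x y ∧ x ∈ unc M ∧ y ∈ unc M then f x y else 0 := by
  unfold dS nbr
  rw [← Finset.sum_filter_add_sum_filter_not Finset.univ (fun x => x ∈ unc M)]
  rw [Finset.sum_eq_zero (s := Finset.univ.filter fun x => x ∉ unc M)]
  · rw [add_zero]
    refine Finset.sum_congr (by ext; simp) fun u hu => ?_
    rw [← Finset.sum_filter]
    refine Finset.sum_congr ?_ fun _ _ => rfl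
    ext v
    simp at hu
    simp [hu]
    tauto
  · intro x hx
    simp at hx
    simp [hx]

lemma dS_symm (M : Finset (Sym2 V)) (f : V → V → ℝ) :
    dS G M f = dS G M (fun u v => f v u) := by
  rw [dS_eq, dS_eq, Finset.sum_comm]
  refine Finset.sum_congr rfl fun x _ => Finset.sum_congr rfl fun y _ => ?_
  simp only [G.adj_comm y x, and_comm (a := y ∈ unc M)]

/-- (III) -/
lemma edge_identity (t : ℝ) :
    ∑ M ∈ matchingsFinset G, 2 * (M.card : ℝ) * t ^ M.card
      = ∑ M ∈ matchingsFinset G, t ^ M.card * (t * dS G M (fun _ _ => 1)) := by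
  have h := bij G (fun M _ _ => t ^ M.card)
  rw [Finset.sum_congr rfl fun M hM => two_card G hM (t ^ M.card)] at h
  rw [h]
  refine Finset.sum_congr rfl fun M _ => ?_
  rw [dS_eq, Finset.mul_sum, Finset.mul_sum]
  refine Finset.sum_congr rfl fun x _ => ?_
  rw [Finset.mul_sum, Finset.mul_sum]
  refine Finset.sum_congr rfl fun y _ => ?_
  split_ifs with h
  · rw [Finset.card_insert_of_notMem (notMem_of_unc h.2.1)]; ring
  · simp

lemma nbr_insert {M : Finset (Sym2 V)} {u v x : V} (huv : G.Adj u v)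
    (hv : v ∈ unc M) (hx : x ∈ unc M) (hvx : G.Adj v x) :
    (nbr G (insert s(v, x) M) u).card =
      if G.Adj u x then (nbr G M u).card - 2 else (nbr G M u).card - 1 := by
  have hvx' := G.ne_of_adj hvx
  have : nbr G (insert s(v, x) M) u = ((nbr G M u).erase v).erase x := by
    ext z
    simp only [mem_nbr, unc_insert, Finset.mem_erase]
    tauto
  rw [this]
  have hvm : v ∈ nbr G M u := (mem_nbr _ _ _ _).2 ⟨hv, huv⟩
  split_ifs with h
  · have hxm : x ∈ (nbr G M u).erase v := by
      simp [mem_nbr, hx, h, hvx'.symm]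
    rw [Finset.card_erase_of_mem hxm, Finset.card_erase_of_mem hvm]; rfl
  · rw [Finset.erase_eq_of_notMem, Finset.card_erase_of_mem hvm]
    simp [mem_nbr, h]

/-- (I) -/
lemma main_identity (d : ℕ) (hreg : ∀ v, (Finset.univ.filter (fun w => G.Adj v w)).card = d)
    (t : ℝ) (φ : ℕ → ℝ) :
    ∑ M ∈ matchingsFinset G, t ^ M.card *
        ∑ u ∈ unc M, φ (nbr G M u).card * ((d : ℝ) - (nbr G M u).card)
      = ∑ M ∈ matchingsFinset G, t ^ M.card * (t * dS G M (fun u v =>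
        (((nbr G M v).card : ℝ) - 1 - (nbr G M u ∩ nbr G M v).card) * φ ((nbr G M u).card - 1)
        + (nbr G M u ∩ nbr G M v).card * φ ((nbr G M u).card - 2))) := by
  have h := bij G (fun M v _ => ∑ u ∈ unc M, if G.Adj u v then t ^ M.card * φ (nbr G M u).card else 0)
  convert h using 1
  · refine Finset.sum_congr rfl fun M hM => ?_
    rw [Finset.sum_congr rfl fun v _ => cov G hM v _]
    have : ∀ v, (if v ∈ unc M then 0 else
        ∑ u ∈ unc M, if G.Adj u v then t ^ M.card * φ (nbr G M u).card else 0)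
        = ∑ u ∈ unc M, if G.Adj u v ∧ v ∉ unc M then t ^ M.card * φ (nbr G M u).card else 0 := by
      intro v
      by_cases hv : v ∈ unc M <;> simp [hv]
    simp_rw [this]
    rw [Finset.sum_comm, Finset.mul_sum]
    refine Finset.sum_congr rfl fun u _ => ?_
    rw [← Finset.sum_filter, Finset.sum_const, nsmul_eq_mul]
    have hc : ((Finset.univ.filter fun v => G.Adj u v ∧ v ∉ unc M).card : ℝ)
        = (d : ℝ) - (nbr G M u).card := by
      rw [eq_sub_iff_add_eq, ← hreg u]
      norm_cast
      rw [add_comm, ← Finset.card_filter_add_card_filter_not (s := Finset.univ.filter fun w => G.Adj u w)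
        (fun w => w ∈ unc M), Finset.filter_filter, Finset.filter_filter]
      congr 2
      ext w
      simp [mem_nbr, and_comm]
    rw [hc]; ring
  · refine Finset.sum_congr rfl fun M hM => ?_
    have hR : ∀ v x, (if G.Adj v x ∧ v ∈ unc M ∧ x ∈ unc M then
        ∑ u ∈ unc (insert s(v, x) M), (if G.Adj u v then
          t ^ (insert s(v, x) M).card * φ (nbr G (insert s(v, x) M) u).card else 0) else 0)
        = ∑ u ∈ unc M, if G.Adj u v ∧ v ∈ unc M then (if x ∈ nbr G M v ∧ x ≠ u then
          t ^ (M.card + 1) * (if G.Adj u x then φ ((nbr G M u).card - 2)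
            else φ ((nbr G M u).card - 1)) else 0) else 0 := by
      intro v x
      split_ifs with h
      · obtain ⟨h1, h2, h3⟩ := h
        have hs : unc (insert s(v, x) M) ⊆ unc M := by
          intro u hu
          exact ((unc_insert _ _ _ _).1 hu).1
        rw [← Finset.sum_subset hs]
        · refine Finset.sum_congr rfl fun u hu => ?_
          rw [unc_insert] at hu
          by_cases huv : G.Adj u v
          · rw [nbr_insert G huv h2 h3 h1, Finset.card_insert_of_notMem (notMem_of_unc h2)]
            have : x ∈ nbr G M v := by simp [mem_nbr, h1, h3]
            simp only [huv, h2, this, hu.2.2.symm, ne_eq, not_false_eq_true, and_self, if_true]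
            split_ifs <;> rfl
          · simp [huv]
        · intro u hu hu'
          rw [unc_insert] at hu'
          by_cases huv : G.Adj u v
          · have : u = x := by
              by_contra hne
              exact hu' ⟨hu, G.ne_of_adj huv, hne⟩
            simp [this]
          · simp [huv]
      · symm
        refine Finset.sum_eq_zero fun u hu => ?_
        by_cases h1 : G.Adj u v ∧ v ∈ unc M
        · rw [if_pos h1, if_neg]
          rintro ⟨h2, -⟩
          rw [mem_nbr] at h2
          exact h ⟨h2.2, h1.2, h2.1⟩
        · rw [if_neg h1]
    simp_rw [hR]
    rw [Finset.sum_congr rfl fun v _ => Finset.sum_comm, Finset.sum_comm]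
    unfold dS
    rw [Finset.mul_sum, Finset.mul_sum]
    refine Finset.sum_congr rfl fun u hu => ?_
    have hT : ∀ v, (∑ x, if G.Adj u v ∧ v ∈ unc M then (if x ∈ nbr G M v ∧ x ≠ u then
          t ^ (M.card + 1) * (if G.Adj u x then φ ((nbr G M u).card - 2)
            else φ ((nbr G M u).card - 1)) else 0) else 0)
        = if v ∈ nbr G M u then (t ^ (M.card + 1) * ((((nbr G M v).card : ℝ) - 1 -
          (nbr G M u ∩ nbr G M v).card) * φ ((nbr G M u).card - 1)
        + (nbr G M u ∩ nbr G M v).card * φ ((nbr G M u).card - 2))) else 0 := by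
      intro v
      by_cases hv : v ∈ nbr G M u
      · have hv' := (mem_nbr _ _ _ _).1 hv
        simp only [hv'.1, hv'.2, and_self, if_true, hv]
        rw [← Finset.sum_filter, ← Finset.mul_sum, Finset.sum_ite, Finset.sum_const,
          Finset.sum_const, nsmul_eq_mul, nsmul_eq_mul]
        have huv : u ∈ nbr G M v := (mem_nbr _ _ _ _).2 ⟨hu, hv'.2.symm⟩
        have f0 : (Finset.univ.filter fun x => x ∈ nbr G M v ∧ x ≠ u) = (nbr G M v).erase u := by
          ext; simp [and_comm]
        have f1 : ((nbr G M v).erase u).filter (fun x => G.Adj u x) = nbr G M u ∩ nbr G M v := by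
          ext z
          simp only [Finset.mem_filter, Finset.mem_erase, mem_nbr, Finset.mem_inter]
          constructor
          · tauto
          · rintro ⟨⟨_, h1⟩, h2⟩
            exact ⟨⟨(G.ne_of_adj h1).symm, h2⟩, h1⟩
        have f2 := Finset.card_filter_add_card_filter_not (s := (nbr G M v).erase u)
          (fun x => G.Adj u x)
        rw [f0]
        rw [f1] at f2 ⊢
        have f3 : (((((nbr G M v).erase u).filter fun x => ¬ G.Adj u x).card : ℕ) : ℝ)
            = ((nbr G M v).card : ℝ) - 1 - (nbr G M u ∩ nbr G M v).card := by
          have f4 := Finset.card_erase_add_one huv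
          rw [← f2] at f4
          rw [← f4]
          push_cast; ring
        rw [f3]
        ring
      · have : ¬ (G.Adj u v ∧ v ∈ unc M) := by
          rw [mem_nbr] at hv; tauto
        simp [hv, this]
    rw [Finset.sum_congr rfl fun v _ => hT v, Finset.sum_ite_mem, Finset.univ_inter, 
      Finset.mul_sum, Finset.mul_sum]
    refine Finset.sum_congr rfl fun v _ => ?_
    ring

end Comb

section Final

variable {V : Type*} [Fintype V] [DecidableEq V] (G : SimpleGraph V)

lemma dS_left (M : Finset (Sym2 V)) (f : V → ℝ) :
    dS G M (fun u _ => f u) = ∑ u ∈ unc M, (nbr G M u).card * f u := by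
  unfold dS
  refine Finset.sum_congr rfl fun u _ => ?_
  rw [Finset.sum_const, nsmul_eq_mul]

lemma dS_add (M : Finset (Sym2 V)) (f g : V → V → ℝ) :
    dS G M (fun u v => f u v + g u v) = dS G M f + dS G M g := by
  unfold dS
  simp_rw [Finset.sum_add_distrib]

lemma dS_smul (M : Finset (Sym2 V)) (c : ℝ) (f : V → V → ℝ) :
    dS G M (fun u v => c * f u v) = c * dS G M f := by
  unfold dS
  simp_rw [Finset.mul_sum]

/-- normalisation at a vertex -/
lemma vertex_identity (t : ℝ) :
    (Fintype.card V : ℝ) * matchingPoly G t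
      = ∑ M ∈ matchingsFinset G, t ^ M.card * ∑ u ∈ unc M, (1 + t * (nbr G M u).card) := by
  have h := edge_identity G t
  unfold matchingPoly
  have h1 : ∀ M ∈ matchingsFinset G,
      2 * (M.card : ℝ) * t ^ M.card = ((Fintype.card V : ℝ) - (unc M).card) * t ^ M.card := by
    intro M hM
    have h2 := two_card G hM 1
    rw [Finset.sum_congr rfl fun x _ => cov G hM x 1] at h2
    have h3 : ∑ x : V, (if x ∈ unc M then (0:ℝ) else 1) = (Fintype.card V : ℝ) - (unc M).card := by
      have : ∀ x : V, (if x ∈ unc M then (0:ℝ) else 1) = 1 - if x ∈ unc M then (1:ℝ) else 0 := by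
        intro x; split_ifs <;> simp
      simp_rw [this, Finset.sum_sub_distrib]
      simp
    rw [h3] at h2
    rw [h2]; ring
  rw [Finset.sum_congr rfl h1] at h
  have h4 : (Fintype.card V : ℝ) * ∑ M ∈ matchingsFinset G, t ^ M.card =
      ∑ M ∈ matchingsFinset G, ((Fintype.card V : ℝ) - (unc M).card) * t ^ M.card
      + ∑ M ∈ matchingsFinset G, t ^ M.card * (unc M).card := by
    rw [Finset.mul_sum, ← Finset.sum_add_distrib]
    exact Finset.sum_congr rfl fun M _ => by ring
  rw [h4, h, ← Finset.sum_add_distrib]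
  refine Finset.sum_congr rfl fun M _ => ?_
  rw [dS_left, Finset.sum_add_distrib, ← Finset.mul_sum]
  simp
  ring

lemma key_ineq (m : ℕ) (hreg : ∀ v, (Finset.univ.filter (fun w => G.Adj v w)).card = m + 1)
    {t : ℝ} (ht : 0 < t) :
    kPoly (m + 1) t * ∑ M ∈ matchingsFinset G, t ^ M.card * dS G M (fun _ _ => 1)
      ≤ kPoly m t * (((m : ℝ) + 1) * (Fintype.card V * matchingPoly G t)) := by
  obtain ⟨g, g0, gmono, geq⟩ := dual_exists m ht
  set c := kPoly (m + 1) t / kPoly m t with hc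
  have hP := kPoly_pos m ht.le
  have hPc : kPoly (m + 1) t = kPoly m t * c := by rw [hc]; field_simp
  rw [hPc, mul_assoc]
  refine mul_le_mul_of_nonneg_left ?_ hP.le
  set φ : ℕ → ℝ := fun i => - g i - t * i with hφ
  have φ0 : φ 0 = 0 := by simp [hφ, g0]
  set f1 : Finset (Sym2 V) → V → V → ℝ := fun M u v =>
    ((m : ℝ) + 1 - (nbr G M u).card) * (φ (nbr G M u).card / (nbr G M u).card)
    - t * ((((nbr G M v).card : ℝ) - 1 - (nbr G M u ∩ nbr G M v).card) * φ ((nbr G M u).card - 1)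
        + (nbr G M u ∩ nbr G M v).card * φ ((nbr G M u).card - 2)) with hf1
  set f2 : Finset (Sym2 V) → V → V → ℝ := fun M u v =>
    t * ((((nbr G M v).card : ℝ) - 1 - (nbr G M u ∩ nbr G M v).card) *
          (1 + t * (((nbr G M u).card - 1 : ℕ) : ℝ))
        + (nbr G M u ∩ nbr G M v).card * (1 + t * (((nbr G M u).card - 2 : ℕ) : ℝ)))
    + (1 + t * (nbr G M u).card) with hf2
  have E1 : ∑ M ∈ matchingsFinset G, t ^ M.card * dS G M (f1 M) = 0 := by
    have h := main_identity G (m + 1) hreg t φ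
    rw [← sub_eq_zero, ← Finset.sum_sub_distrib] at h
    rw [← h]
    refine Finset.sum_congr rfl fun M _ => ?_
    rw [← mul_sub]
    congr 1
    rw [hf1]
    simp only [sub_eq_add_neg, ← neg_mul]
    rw [dS_add, dS_smul, dS_left]
    congr 1
    · refine Finset.sum_congr rfl fun u _ => ?_
      by_cases h0 : (nbr G M u).card = 0
      · rw [h0, φ0]; simp
      · have : ((nbr G M u).card : ℝ) ≠ 0 := by exact_mod_cast h0
        push_cast
        field_simp
  have E1' : ∑ M ∈ matchingsFinset G, t ^ M.card * dS G M (fun u v => f1 M v u) = 0 := by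
    rw [← E1]
    exact Finset.sum_congr rfl fun M _ => by rw [dS_symm G M (f1 M)]
  have E2 : ∑ M ∈ matchingsFinset G, t ^ M.card * dS G M (f2 M)
      = ((m : ℝ) + 1) * (Fintype.card V * matchingPoly G t) := by
    have h := main_identity G (m + 1) hreg t (fun i => 1 + t * i)
    have h' : ∀ M ∈ matchingsFinset G, t ^ M.card * dS G M (f2 M) = 
      t ^ M.card * (t * dS G M (fun u v =>
        (((nbr G M v).card : ℝ) - 1 - (nbr G M u ∩ nbr G M v).card) *
          (1 + t * (((nbr G M u).card - 1 : ℕ) : ℝ))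
        + (nbr G M u ∩ nbr G M v).card * (1 + t * (((nbr G M u).card - 2 : ℕ) : ℝ))))
      + t ^ M.card * dS G M (fun u _ => 1 + t * (nbr G M u).card) := by
      intro M _
      rw [hf2, ← mul_add]
      simp only
      rw [dS_add, dS_smul]
    rw [Finset.sum_congr rfl h', Finset.sum_add_distrib, ← h, ← Finset.sum_add_distrib,
      vertex_identity, Finset.mul_sum]
    refine Finset.sum_congr rfl fun M _ => ?_
    rw [dS_left, ← mul_add, ← Finset.sum_add_distrib, mul_left_comm]
    congr 1
    rw [Finset.mul_sum]
    refine Finset.sum_congr rfl fun u _ => ?_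
    push_cast
    ring
  have E3 : c * ∑ M ∈ matchingsFinset G, t ^ M.card * dS G M (fun _ _ => 1)
      = ∑ M ∈ matchingsFinset G, t ^ M.card *
        dS G M (fun u v => c * 1 + 1 / 2 * (f1 M u v + f1 M v u)) := by
    have : ∀ M ∈ matchingsFinset G, t ^ M.card *
        dS G M (fun u v => c * 1 + 1 / 2 * (f1 M u v + f1 M v u))
        = c * (t ^ M.card * dS G M (fun _ _ => 1)) + 1 / 2 * (t ^ M.card * dS G M (f1 M)
          + t ^ M.card * dS G M (fun u v => f1 M v u)) := by
      intro M _
      rw [dS_add, dS_smul, dS_smul, dS_add]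
      ring
    rw [Finset.sum_congr rfl this, Finset.sum_add_distrib, ← Finset.mul_sum, ← Finset.mul_sum,
      Finset.sum_add_distrib, E1, E1']
    ring
  rw [E3, ← E2]
  refine Finset.sum_le_sum fun M hM => mul_le_mul_of_nonneg_left ?_ (by positivity)
  unfold dS
  refine Finset.sum_le_sum fun u hu => Finset.sum_le_sum fun v hv => ?_
  have hu' : u ∈ nbr G M v := (mem_nbr _ _ _ _).2 ⟨hu, ((mem_nbr _ _ _ _).1 hv).2.symm⟩
  have hle : ∀ w, (nbr G M w).card ≤ m + 1 := by
    intro w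
    rw [← hreg w]
    refine Finset.card_le_card fun x hx => ?_
    simpa using ((mem_nbr _ _ _ _).1 hx).2
  have hk1 : (nbr G M u ∩ nbr G M v).card + 1 ≤ (nbr G M u).card := by
    rw [← Finset.card_erase_add_one hv]
    refine Nat.succ_le_succ (Finset.card_le_card fun x hx => ?_)
    rw [Finset.mem_inter] at hx
    exact Finset.mem_erase.2 ⟨(G.ne_of_adj ((mem_nbr _ _ _ _).1 hx.2).2).symm, hx.1⟩
  have hk2 : (nbr G M u ∩ nbr G M v).card + 1 ≤ (nbr G M v).card := by
    rw [← Finset.card_erase_add_one hu']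
    refine Nat.succ_le_succ (Finset.card_le_card fun x hx => ?_)
    rw [Finset.mem_inter] at hx
    exact Finset.mem_erase.2 ⟨(G.ne_of_adj ((mem_nbr _ _ _ _).1 hx.1).2).symm, hx.2⟩
  have hpu := hle u
  have hpv := hle v
  rw [hf1, hf2]
  simp only [hφ]
  rw [Finset.inter_comm (nbr G M v) (nbr G M u)]
  generalize (nbr G M u ∩ nbr G M v).card = k at *
  generalize (nbr G M u).card = p at *
  generalize (nbr G M v).card = q at *
  obtain ⟨a, rfl⟩ : ∃ a, p = a + 1 := ⟨p - 1, by omega⟩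
  obtain ⟨b, rfl⟩ : ∃ b, q = b + 1 := ⟨q - 1, by omega⟩
  have := dual_ineq m ht g gmono geq a b k (by omega) (by omega) (by omega) (by omega)
  rw [show a + 1 - 1 = a by omega, show b + 1 - 1 = b by omega,
    show a + 1 - 2 = a - 1 by omega, show b + 1 - 2 = b - 1 by omega]
  have hka : (k : ℝ) * ((a - 1 : ℕ) : ℝ) = k * (a - 1) := by
    rcases Nat.eq_zero_or_pos k with h | h
    · simp [h]
    · rw [Nat.cast_sub (by omega)]; simp
  have hr : t * (((b + 1 : ℕ) - 1 - (k : ℝ)) * (1 + t * a) + k * (1 + t * ((a - 1 : ℕ) : ℝ)))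
      + (1 + t * (a + 1 : ℕ)) = 1 + t * (1 + a + b) + t ^ 2 * (a * b - k) := by
    push_cast
    linear_combination t ^ 2 * hka
  rw [hr]
  refine le_trans (le_of_eq ?_) this
  push_cast
  ring

lemma kPoly_hasDerivAt (m : ℕ) (t : ℝ) :
    HasDerivAt (kPoly (m + 1)) (((m : ℝ) + 1) ^ 2 * kPoly m t) t := by
  have h : HasDerivAt (kPoly (m + 1)) (∑ k ∈ Finset.range (m + 1 + 1),
      (((m + 1).choose k : ℝ) ^ 2 * (k.factorial : ℝ)) * (k * t ^ (k - 1))) t := by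
    unfold kPoly
    exact HasDerivAt.fun_sum fun k _ => (hasDerivAt_pow k t).const_mul _
  convert h using 1
  rw [Finset.sum_range_succ']
  unfold kPoly
  rw [Finset.mul_sum]
  simp only [Nat.cast_zero, zero_mul, mul_zero, add_zero]
  refine Finset.sum_congr rfl fun k _ => ?_
  have h3 : ((m : ℝ) + 1) * (m.choose k : ℝ) = ((m + 1).choose (k + 1) : ℝ) * (k + 1) := by
    exact_mod_cast Nat.add_one_mul_choose_eq m k
  rw [Nat.factorial_succ, Nat.add_sub_cancel]
  push_cast
  have : ((m : ℝ) + 1) ^ 2 * ((m.choose k : ℝ) ^ 2 * (k.factorial : ℝ) * t ^ k)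
    = (((m : ℝ) + 1) * (m.choose k : ℝ)) ^ 2 * (k.factorial : ℝ) * t ^ k := by ring
  rw [this, h3]
  ring

lemma mPoly_hasDerivAt (t : ℝ) :
    HasDerivAt (matchingPoly G)
      (∑ M ∈ matchingsFinset G, (M.card : ℝ) * t ^ (M.card - 1)) t := by
  unfold matchingPoly
  exact HasDerivAt.fun_sum fun M _ => hasDerivAt_pow M.card t

lemma mPoly_deriv_eq {t : ℝ} (ht : 0 < t) :
    2 * ∑ M ∈ matchingsFinset G, (M.card : ℝ) * t ^ (M.card - 1)
      = ∑ M ∈ matchingsFinset G, t ^ M.card * dS G M (fun _ _ => 1) := by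
  have h := edge_identity G t
  apply mul_left_cancel₀ ht.ne'
  rw [Finset.mul_sum, Finset.mul_sum, Finset.mul_sum]
  convert h using 1
  · refine Finset.sum_congr rfl fun M _ => ?_
    rcases Nat.eq_zero_or_pos M.card with h0 | h0
    · simp [h0]
    · obtain ⟨k, hk⟩ : ∃ k, M.card = k + 1 := ⟨M.card - 1, by omega⟩
      rw [hk]; simp; ring
  · exact Finset.sum_congr rfl fun M _ => by ring

lemma empty_mem : (∅ : Finset (Sym2 V)) ∈ matchingsFinset G := by
  simp [mem_mF]

lemma mPoly_zero : matchingPoly G 0 = 1 := by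
  unfold matchingPoly
  rw [Finset.sum_eq_single ∅]
  · simp
  · intro M _ hM
    simp [hM]
  · intro h; exact absurd (empty_mem G) h

lemma kPoly_zero (m : ℕ) : kPoly m 0 = 1 := by
  unfold kPoly
  rw [Finset.sum_range_succ']
  simp

lemma mPoly_le (m N : ℕ) (hreg : ∀ v, (Finset.univ.filter (fun w => G.Adj v w)).card = m + 1)
    (hN : Fintype.card V = 2 * (m + 1) * N) :
    matchingPoly G 1 ≤ kPoly (m + 1) 1 ^ N := by
  have hpos : ∀ t : ℝ, 0 ≤ t → 0 < kPoly (m + 1) t ^ N := fun t ht => pow_pos (kPoly_pos _ ht) N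
  have hder : ∀ t : ℝ, 0 ≤ t → HasDerivAt (fun t => matchingPoly G t / kPoly (m + 1) t ^ N)
      (((∑ M ∈ matchingsFinset G, (M.card : ℝ) * t ^ (M.card - 1)) * kPoly (m + 1) t ^ N
        - matchingPoly G t * (N * kPoly (m + 1) t ^ (N - 1) * (((m : ℝ) + 1) ^ 2 * kPoly m t)))
        / (kPoly (m + 1) t ^ N) ^ 2) t := fun t ht =>
    (mPoly_hasDerivAt G t).fun_div ((kPoly_hasDerivAt m t).fun_pow N) (hpos t ht).ne'
  have hanti : AntitoneOn (fun t => matchingPoly G t / kPoly (m + 1) t ^ N) (Set.Icc 0 1) := by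
    apply antitoneOn_of_deriv_nonpos (convex_Icc 0 1)
    · intro t ht
      exact (hder t ht.1).continuousAt.continuousWithinAt
    · intro t ht
      rw [interior_Icc] at ht
      exact (hder t ht.1.le).differentiableAt.differentiableWithinAt
    · intro t ht
      rw [interior_Icc] at ht
      rw [(hder t ht.1.le).deriv]
      apply div_nonpos_of_nonpos_of_nonneg _ (by positivity)
      have hk := key_ineq G m hreg ht.1
      rw [← mPoly_deriv_eq G ht.1, hN] at hk
      push_cast at hk
      have hP := kPoly_pos (m + 1) ht.1.le
      rcases Nat.eq_zero_or_pos N with h0 | h0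
      · subst h0
        simp only [Nat.cast_zero, mul_zero, zero_mul, pow_zero, mul_one, sub_zero] at hk ⊢
        by_contra hcon
        push Not at hcon
        have := mul_pos hP hcon
        linarith
      · obtain ⟨j, rfl⟩ : ∃ j, N = j + 1 := ⟨N - 1, by omega⟩
        rw [Nat.add_sub_cancel, pow_succ]
        have h2 := mul_le_mul_of_nonneg_left hk (pow_pos hP j).le
        push_cast at h2 ⊢
        nlinarith
  have := hanti (Set.left_mem_Icc.2 zero_le_one) (Set.right_mem_Icc.2 zero_le_one) zero_le_one
  simp only [mPoly_zero, kPoly_zero, one_pow, div_one] at this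
  rwa [div_le_one (hpos 1 zero_le_one)] at this

end Final

/-- Every $d$-regular graph on $n$ vertices (with $2d \mid n$) has at most
$\big(\sum_{k=0}^d \binom dk^2 k!\big)^{n/(2d)}$ matchings, the count for a
disjoint union of $n/(2d)$ copies of $K_{d,d}$. -/
theorem card_matchings_le {V : Type*} [Fintype V] [DecidableEq V] (G : SimpleGraph V)
    (d : ℕ) (hd : 1 ≤ d) (hreg : G.IsRegularOfDegree d)
    (hdvd : 2 * d ∣ Fintype.card V) :
    (matchingsFinset G).card
      ≤ (∑ k ∈ Finset.range (d + 1), (d.choose k) ^ 2 * k.factorial) ^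
          (Fintype.card V / (2 * d)) := by
  obtain ⟨m, rfl⟩ : ∃ m, d = m + 1 := ⟨d - 1, by omega⟩
  obtain ⟨N, hN⟩ := hdvd
  have hreg' : ∀ v, (Finset.univ.filter (fun w => G.Adj v w)).card = m + 1 := by
    intro v
    rw [← hreg v, ← SimpleGraph.card_neighborFinset_eq_degree]
    congr 1
    ext w
    simp
  have h := mPoly_le G m N hreg' hN
  rw [hN, Nat.mul_div_cancel_left _ (by omega)]
  have h1 : matchingPoly G 1 = ((matchingsFinset G).card : ℝ) := by
    simp [matchingPoly]
  have h2 : kPoly (m + 1) 1 = ((∑ k ∈ Finset.range (m + 1 + 1),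
      ((m + 1).choose k) ^ 2 * k.factorial : ℕ) : ℝ) := by
    simp [kPoly]
  rw [h1, h2] at h
  exact_mod_cast h
end
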